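/- arXiv:2308.09374 — 2 statements merged into one kernel-verified Lean document; each statement's English description precedes it below -/
import Mathlib

section
/- Let F_n be the set of Boolean functions from {-1,1}^n to {-1,1} and let π_n be a probability measure on F_n. Let ε_n ≤ 1/2 be non-increasing with ε_n → 0. Then {π_n} is annealed quantitatively noise sensitive (QNS) at level {ε_n} if and only if {π_n} is quenched QNS at level {ε_n} and Var_{f_n}(E_ω[f_n(ω)]) → 0 as n → ∞. -/
open Finset Filter

noncomputable section

/-- The ±1 real value of a Boolean bit. -/
def chi (b : Bool) : ℝ := if b then 1 else -1

/-- The joint probability of the pair `(ω, ω^ε)`, where `ω` is uniform on `{-1,1}^n` and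
`ω^ε` flips each bit of `ω` independently with probability `ε`. -/
def pairWeight (n : ℕ) (ε : ℝ) (ω η : Fin n → Bool) : ℝ :=
  (1 / 2) ^ n * ∏ i, (if ω i = η i then 1 - ε else ε)

/-- Expectation of `g ω` for `ω` uniform on `{-1,1}^n`. -/
def unifMean (n : ℕ) (g : (Fin n → Bool) → ℝ) : ℝ := (∑ ω, g ω) / 2 ^ n

/-- Expectation of `F ω ω^ε` over the correlated pair `(ω, ω^ε)`. -/
def pairMean (n : ℕ) (ε : ℝ) (F : (Fin n → Bool) → (Fin n → Bool) → ℝ) : ℝ :=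
  ∑ ω, ∑ η, pairWeight n ε ω η * F ω η

/-- `Cov_{ω,ω^ε}(g(ω), g(ω^ε))` for a fixed (real-valued) function `g` on the cube. -/
def noiseCov (n : ℕ) (ε : ℝ) (g : (Fin n → Bool) → ℝ) : ℝ :=
  pairMean n ε (fun ω η => g ω * g η) - unifMean n g ^ 2

/-- Noise kernel. -/
def kerK (n : ℕ) (d : ℝ) (ω η : Fin n → Bool) : ℝ :=
  ∏ i, (if ω i = η i then 1 - d else d)

theorem kerK_symm (n : ℕ) (d : ℝ) (ω η : Fin n → Bool) : kerK n d ω η = kerK n d η ω := by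
  unfold kerK
  exact Finset.prod_congr rfl (fun i _ => by simp only [eq_comm])

theorem kerK_sum (n : ℕ) (d : ℝ) (ω : Fin n → Bool) : ∑ η, kerK n d ω η = 1 := by
  unfold kerK
  have h := Finset.prod_univ_sum (fun _ : Fin n => (Finset.univ : Finset Bool))
    (fun i b => if ω i = b then 1 - d else d)
  rw [Fintype.piFinset_univ] at h
  rw [← h]
  apply Finset.prod_eq_one
  intro i _
  cases ω i <;> simp

theorem kerK_sum2 (n : ℕ) (d : ℝ) (ω η : Fin n → Bool) :
    ∑ ζ, kerK n d ω ζ * kerK n d ζ η = kerK n (2 * d * (1 - d)) ω η := by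
  unfold kerK
  have h := Finset.prod_univ_sum (fun _ : Fin n => (Finset.univ : Finset Bool))
    (fun i b => (if ω i = b then 1 - d else d) * (if b = η i then 1 - d else d))
  rw [Fintype.piFinset_univ] at h
  simp only [← Finset.prod_mul_distrib]
  rw [← h]
  apply Finset.prod_congr rfl
  intro i _
  cases ω i <;> cases η i <;> simp <;> ring

theorem pairMean_eq (n : ℕ) (d : ℝ) (g : (Fin n → Bool) → ℝ) :
    pairMean n (2 * d * (1 - d)) (fun ω η => g ω * g η)
      = (∑ ζ, (∑ ω, kerK n d ζ ω * g ω) ^ 2) / 2 ^ n := by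
  have h1 : ∀ ω η, pairWeight n (2 * d * (1 - d)) ω η * (g ω * g η)
      = (∑ ζ, (kerK n d ζ ω * g ω) * (kerK n d ζ η * g η)) / 2 ^ n := by
    intro ω η
    have : pairWeight n (2 * d * (1 - d)) ω η = (1 / 2) ^ n * kerK n (2 * d * (1 - d)) ω η := rfl
    rw [this, ← kerK_sum2, one_div, inv_pow, div_eq_inv_mul, mul_assoc, Finset.sum_mul]
    congr 1
    apply Finset.sum_congr rfl
    intro ζ _
    rw [kerK_symm n d ω ζ]
    ring
  unfold pairMean
  simp only [h1, ← Finset.sum_div]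
  congr 1
  simp only [sq, Finset.sum_mul_sum]
  rw [Finset.sum_comm' (t' := Finset.univ) (s' := fun _ => Finset.univ) (by simp)]
  rw [Finset.sum_comm]
  conv_rhs => rw [Finset.sum_comm]
  apply Finset.sum_congr rfl
  intro ω _
  rw [Finset.sum_comm]

theorem unifMean_eq (n : ℕ) (d : ℝ) (g : (Fin n → Bool) → ℝ) :
    unifMean n g = (∑ ζ, (∑ ω, kerK n d ζ ω * g ω)) / 2 ^ n := by
  unfold unifMean
  rw [Finset.sum_comm]
  congr 1
  apply Finset.sum_congr rfl
  intro ω _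
  rw [← Finset.sum_mul]
  simp only [kerK_symm n d _ ω]
  rw [kerK_sum, one_mul]

theorem noiseCov_nonneg (n : ℕ) (e : ℝ) (he : e ≤ 1 / 2) (g : (Fin n → Bool) → ℝ) :
    0 ≤ noiseCov n e g := by
  obtain ⟨d, rfl⟩ : ∃ d : ℝ, e = 2 * d * (1 - d) := by
    refine ⟨(1 - Real.sqrt (1 - 2 * e)) / 2, ?_⟩
    have := Real.sq_sqrt (show 0 ≤ 1 - 2 * e by linarith)
    nlinarith
  unfold noiseCov
  rw [pairMean_eq, unifMean_eq n d]
  have h := sq_sum_le_card_mul_sum_sq (s := (Finset.univ : Finset (Fin n → Bool)))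
    (f := fun ζ => ∑ ω, kerK n d ζ ω * g ω)
  have hc : (((Finset.univ : Finset (Fin n → Bool)).card : ℕ) : ℝ) = 2 ^ n := by simp
  rw [hc] at h
  have hp : (0 : ℝ) < 2 ^ n := by positivity
  rw [sub_nonneg, div_pow, div_le_div_iff₀ (by positivity) hp]
  nlinarith

theorem noiseCov_le_one (n : ℕ) (e : ℝ) (h0 : 0 < e) (he : e ≤ 1 / 2)
    (f : (Fin n → Bool) → Bool) :
    noiseCov n e (fun ω => chi (f ω)) ≤ 1 := by
  have h1 : pairMean n e (fun ω η => chi (f ω) * chi (f η)) ≤ 1 := by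
    have hk : ∀ ω η, pairWeight n e ω η = (1 / 2) ^ n * kerK n e ω η := fun _ _ => rfl
    have hs : ∑ ω, ∑ η, pairWeight n e ω η = 1 := by
      simp only [hk, ← Finset.mul_sum, kerK_sum]
      simp
    rw [← hs]
    unfold pairMean
    refine Finset.sum_le_sum fun ω _ => Finset.sum_le_sum fun η _ => ?_
    have hw : 0 ≤ pairWeight n e ω η := by
      unfold pairWeight
      refine mul_nonneg (by positivity) (Finset.prod_nonneg fun i _ => ?_)
      split_ifs <;> linarith
    have : chi (f ω) * chi (f η) ≤ 1 := by
      unfold chi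
      split_ifs <;> norm_num
    nlinarith
  unfold noiseCov
  nlinarith [sq_nonneg (unifMean n (fun ω => chi (f ω)))]

theorem pmf_sum_one {α : Type*} [Fintype α] (p : PMF α) : ∑ a, (p a).toReal = 1 := by
  have h := p.tsum_coe
  rw [tsum_fintype] at h
  rw [← ENNReal.toReal_sum (fun a _ => p.apply_ne_top a), h]
  simp

theorem var_nonneg {α : Type*} [Fintype α] (w : α → ℝ) (hw : ∀ a, 0 ≤ w a)
    (hs : ∑ a, w a = 1) (X : α → ℝ) : 0 ≤ ∑ a, w a * X a ^ 2 - (∑ a, w a * X a) ^ 2 := by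
  obtain ⟨m, hm⟩ : ∃ m, m = ∑ a, w a * X a := ⟨_, rfl⟩
  have h : 0 ≤ ∑ a, w a * (X a - m) ^ 2 :=
    Finset.sum_nonneg fun a _ => mul_nonneg (hw a) (sq_nonneg _)
  have h2 : ∑ a, w a * (X a - m) ^ 2
      = ∑ a, w a * X a ^ 2 - 2 * m * ∑ a, w a * X a + m ^ 2 * ∑ a, w a := by
    rw [Finset.mul_sum, Finset.mul_sum, ← Finset.sum_sub_distrib, ← Finset.sum_add_distrib]
    exact Finset.sum_congr rfl fun a _ => by ring
  rw [h2, hs, ← hm] at h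
  rw [← hm]
  nlinarith

theorem markov_up {α : Type*} [Fintype α] (w : α → ℝ) (hw : ∀ a, 0 ≤ w a)
    (hs : ∑ a, w a = 1) (X : α → ℝ) (h0 : ∀ a, 0 ≤ X a) (δ : ℝ) :
    δ * (1 - ∑ a, w a * (if X a ≤ δ then 1 else 0)) ≤ ∑ a, w a * X a := by
  have e : (1 : ℝ) - ∑ a, w a * (if X a ≤ δ then (1 : ℝ) else 0)
      = ∑ a, (w a - w a * (if X a ≤ δ then (1 : ℝ) else 0)) := by
    rw [Finset.sum_sub_distrib, hs]
  rw [e, Finset.mul_sum]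
  refine Finset.sum_le_sum fun a _ => ?_
  have := hw a
  have := h0 a
  split_ifs with h
  · have := mul_nonneg (hw a) (h0 a)
    linarith
  · push Not at h
    nlinarith

theorem markov_down {α : Type*} [Fintype α] (w : α → ℝ) (hw : ∀ a, 0 ≤ w a)
    (hs : ∑ a, w a = 1) (X : α → ℝ) (h1 : ∀ a, X a ≤ 1) (δ : ℝ) (hδ : 0 < δ) :
    ∑ a, w a * X a ≤ δ + (1 - ∑ a, w a * (if X a ≤ δ then 1 else 0)) := by
  have : δ + (1 - ∑ a, w a * (if X a ≤ δ then (1 : ℝ) else 0))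
      = ∑ a, w a * (δ + (1 - (if X a ≤ δ then (1 : ℝ) else 0))) := by
    simp only [mul_add, mul_sub, Finset.sum_add_distrib, Finset.sum_sub_distrib,
      ← Finset.sum_mul, hs, one_mul]
  rw [this]
  refine Finset.sum_le_sum fun a _ => mul_le_mul_of_nonneg_left ?_ (hw a)
  have := h1 a
  split_ifs with h <;> linarith

/-- for probability measures `pm n` on Boolean functions and levels `ε n ≤ 1/2`
non-increasing with `ε n → 0`, annealed QNS at level `{ε_n}` holds iff quenched QNS at level
`{ε_n}` holds and `Var_{f}(E_ω[f(ω)]) → 0`. -/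
theorem annealed_QNS_iff_quenched_QNS_and_var_tendsto_zero
    (pm : (n : ℕ) → PMF ((Fin n → Bool) → Bool))
    (ε : ℕ → ℝ) (hε_pos : ∀ n, 0 < ε n) (hε_half : ∀ n, ε n ≤ 1 / 2)
    (hε_anti : Antitone ε) (hε_lim : Tendsto ε atTop (nhds 0)) :
    -- annealed QNS at level {ε_n}
    Tendsto (fun n =>
        (∑ f : (Fin n → Bool) → Bool, (pm n f).toReal *
            pairMean n (ε n) (fun ω η => chi (f ω) * chi (f η)))
          - (∑ f : (Fin n → Bool) → Bool,
              (pm n f).toReal * unifMean n (fun ω => chi (f ω))) ^ 2)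
      atTop (nhds 0)
    ↔
    -- quenched QNS at level {ε_n}
    ((∀ δ : ℝ, 0 < δ → ∃ N : ℕ, ∀ n ≥ N,
        (1 : ℝ) - δ ≤ ∑ f : (Fin n → Bool) → Bool, (pm n f).toReal *
          (if noiseCov n (ε n) (fun ω => chi (f ω)) ≤ δ then 1 else 0))
      ∧
      -- Var_{f}(E_ω[f(ω)]) → 0
      Tendsto (fun n =>
          (∑ f : (Fin n → Bool) → Bool,
              (pm n f).toReal * unifMean n (fun ω => chi (f ω)) ^ 2)
            - (∑ f : (Fin n → Bool) → Bool,
                (pm n f).toReal * unifMean n (fun ω => chi (f ω))) ^ 2)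
        atTop (nhds 0)) := by
  have hw : ∀ n f, 0 ≤ (pm n f).toReal := fun n f => ENNReal.toReal_nonneg
  have hs : ∀ n, ∑ f, (pm n f).toReal = 1 := fun n => pmf_sum_one (pm n)
  have hC0 : ∀ n (f : (Fin n → Bool) → Bool), 0 ≤ noiseCov n (ε n) (fun ω => chi (f ω)) :=
    fun n f => noiseCov_nonneg n _ (hε_half n) _
  have hC1 : ∀ n (f : (Fin n → Bool) → Bool), noiseCov n (ε n) (fun ω => chi (f ω)) ≤ 1 :=
    fun n f => noiseCov_le_one n _ (hε_pos n) (hε_half n) f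
  have hV0 : ∀ n, 0 ≤ (∑ f : (Fin n → Bool) → Bool,
              (pm n f).toReal * unifMean n (fun ω => chi (f ω)) ^ 2)
            - (∑ f : (Fin n → Bool) → Bool,
                (pm n f).toReal * unifMean n (fun ω => chi (f ω))) ^ 2 :=
    fun n => var_nonneg _ (hw n) (hs n) _
  have hE0 : ∀ n, 0 ≤ ∑ f : (Fin n → Bool) → Bool,
      (pm n f).toReal * noiseCov n (ε n) (fun ω => chi (f ω)) :=
    fun n => Finset.sum_nonneg fun f _ => mul_nonneg (hw n f) (hC0 n f)
  have hA : ∀ n, (∑ f : (Fin n → Bool) → Bool, (pm n f).toReal *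
            pairMean n (ε n) (fun ω η => chi (f ω) * chi (f η)))
          - (∑ f : (Fin n → Bool) → Bool,
              (pm n f).toReal * unifMean n (fun ω => chi (f ω))) ^ 2
      = (∑ f : (Fin n → Bool) → Bool,
          (pm n f).toReal * noiseCov n (ε n) (fun ω => chi (f ω)))
        + ((∑ f : (Fin n → Bool) → Bool,
              (pm n f).toReal * unifMean n (fun ω => chi (f ω)) ^ 2)
            - (∑ f : (Fin n → Bool) → Bool,
                (pm n f).toReal * unifMean n (fun ω => chi (f ω))) ^ 2) := by
    intro n
    simp only [noiseCov, mul_sub, Finset.sum_sub_distrib]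
    ring
  simp only [hA]
  constructor
  · intro h
    have hE := squeeze_zero hE0 (fun n => le_add_of_nonneg_right (hV0 n)) h
    have hV := squeeze_zero hV0 (fun n => le_add_of_nonneg_left (hE0 n)) h
    refine ⟨fun δ hδ => ?_, hV⟩
    have hev := hE.eventually (gt_mem_nhds (show (0 : ℝ) < δ * δ by positivity))
    obtain ⟨N, hN⟩ := eventually_atTop.1 hev
    refine ⟨N, fun n hn => ?_⟩
    have h1 := hN n hn
    have h2 := markov_up _ (hw n) (hs n) _ (hC0 n) δ
    have h3 := lt_of_mul_lt_mul_left (h2.trans_lt h1) hδ.le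
    linarith
  · rintro ⟨hQ, hV⟩
    have hE : Tendsto (fun n => ∑ f : (Fin n → Bool) → Bool,
        (pm n f).toReal * noiseCov n (ε n) (fun ω => chi (f ω))) atTop (nhds 0) := by
      rw [Metric.tendsto_atTop]
      intro r hr
      obtain ⟨N, hN⟩ := hQ (r / 3) (by positivity)
      refine ⟨N, fun n hn => ?_⟩
      rw [Real.dist_eq, sub_zero, abs_of_nonneg (hE0 n)]
      have h1 := hN n hn
      have h2 := markov_down _ (hw n) (hs n) _ (hC1 n) (r / 3) (by positivity)
      linarith
    simpa using hE.add hV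

end
end

section
/- Consider the fully connected sign network with i.i.d. standard normal weights: ω_0 = ω ∈ {-1,1}^n, ω_t = sign(θ_t ω_{t-1}) for t = 1,...,T_n, with θ_1,...,θ_{T_n} independent n×n matrices of i.i.d. N(0,1) entries, and f_{n,T_n}(ω) = h_n(ω_{T_n}) for Boolean functions h_n : {-1,1}^n → {-1,1}. Let 1/2 ≥ ε_n ↓ 0 with n·ε_n → ∞, let K_n satisfy K_n/log(1/ε_n) → ∞, and let b_n → 0 with n·b_n → ∞. If T_n ∈ [K_n, e^{b_n n}], then for any choice of Boolean functions {h_n}, the random functions {f_{n,T_n}} are annealed quantitatively noise sensitive at level {ε_n}: lim_{n→∞} Cov_{Θ,ω,ω^{ε_n}}(f_{n,T_n}(ω), f_{n,T_n}(ω^{ε_n})) = 0. -/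
open Finset Filter MeasureTheory ProbabilityTheory

noncomputable section

/-- `P_{ω,ω^ε}(f(ω) ≠ f(ω^ε))` for a fixed Boolean function `f`. -/
def disagreeProb (n : ℕ) (ε : ℝ) (f : (Fin n → Bool) → Bool) : ℝ :=
  pairMean n ε (fun ω η => if f ω = f η then 0 else 1)

/-- The sign function with the convention `sgn z = 1` if `z > 0` and `-1` otherwise. -/
def sgn (x : ℝ) : ℝ := if 0 < x then 1 else -1

/-- One layer of the sign network: `x ↦ sign(θ x)`, coordinatewise. -/
def layerMap (n : ℕ) (θ : Fin n → Fin n → ℝ) (x : Fin n → ℝ) : Fin n → ℝ :=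
  fun i => sgn (∑ j, θ i j * x j)

/-- The full network: `ω_T` obtained from `ω_0 = x` by `ω_t = sign(θ_t ω_{t-1})`. -/
def network (n T : ℕ) (Θ : Fin T → Fin n → Fin n → ℝ) (x : Fin n → ℝ) : Fin n → ℝ :=
  (List.ofFn Θ).foldl (fun y θ => layerMap n θ y) x

/-- The Boolean output `f_{n,T}(ω) = h(ω_T)` of the network. -/
def boolOut (n T : ℕ) (h : (Fin n → Bool) → Bool) (Θ : Fin T → Fin n → Fin n → ℝ)
    (ω : Fin n → Bool) : Bool :=
  h fun i => decide (0 < network n T Θ (fun j => chi (ω j)) i)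

/-- The ±1-valued output of the network. -/
def netOut (n T : ℕ) (h : (Fin n → Bool) → Bool) (Θ : Fin T → Fin n → Fin n → ℝ)
    (ω : Fin n → Bool) : ℝ :=
  chi (boolOut n T h Θ ω)

/-- The law of the i.i.d. standard normal weights `Θ = (θ_1, ..., θ_T)`. -/
def weightMeas (n T : ℕ) : Measure (Fin T → Fin n → Fin n → ℝ) :=
  Measure.pi fun _ => Measure.pi fun _ => Measure.pi fun _ => gaussianReal 0 1

/-- The annealed covariance `Cov_{Θ,ω,ω^ε}(f_{n,T}(ω), f_{n,T}(ω^ε))`. -/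
def annealedCov (n T : ℕ) (ε : ℝ) (h : (Fin n → Bool) → Bool) : ℝ :=
  (∫ Θ, pairMean n ε (fun ω η => netOut n T h Θ ω * netOut n T h Θ η) ∂weightMeas n T)
    - (∫ Θ, unifMean n (netOut n T h Θ) ∂weightMeas n T) ^ 2


abbrev gg : Measure (ℝ × ℝ) := (gaussianReal 0 1).prod (gaussianReal 0 1)

lemma gg_eq : gg = (volume : Measure (ℝ × ℝ)).withDensity
    (fun z => gaussianPDF 0 1 z.1 * gaussianPDF 0 1 z.2) := by
  unfold gg
  rw [gaussianReal_of_var_ne_zero _ one_ne_zero, prod_withDensity (by fun_prop) (by fun_prop)]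
  rfl

lemma pdf_polar (r θ : ℝ) : gaussianPDF 0 1 (r * Real.cos θ) * gaussianPDF 0 1 (r * Real.sin θ)
    = gaussianPDF 0 1 r * gaussianPDF 0 1 0 := by
  simp only [gaussianPDF, ← ENNReal.ofReal_mul (gaussianPDFReal_nonneg _ _ _)]
  congr 1
  simp only [gaussianPDFReal]
  rw [show ∀ c x y : ℝ, c * x * (c * y) = c * c * (x * y) from fun _ _ _ => by ring,
    show ∀ c x y : ℝ, c * x * (c * y) = c * c * (x * y) from fun _ _ _ => by ring, ← Real.exp_add, ← Real.exp_add]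
  congr 2
  have := Real.sin_sq_add_cos_sq θ
  have h : (r * Real.cos θ)^2 + (r * Real.sin θ)^2 = r^2 := by
    linear_combination r^2 * this
  simp
  linarith

lemma gg_polar (S : Set (ℝ × ℝ)) (hS : MeasurableSet S) (A : Set ℝ) (hA : MeasurableSet A)
    (h : ∀ r θ : ℝ, 0 < r → θ ∈ Set.Ioo (-Real.pi) Real.pi →
      ((r * Real.cos θ, r * Real.sin θ) ∈ S ↔ θ ∈ A)) :
    gg S = (∫⁻ r in Set.Ioi (0:ℝ), ENNReal.ofReal r * (gaussianPDF 0 1 r * gaussianPDF 0 1 0)) *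
      volume (A ∩ Set.Ioo (-Real.pi) Real.pi) := by
  rw [gg_eq, withDensity_apply _ hS, ← lintegral_indicator hS, ← lintegral_comp_polarCoord_symm]
  have e : ∀ p ∈ polarCoord.target, ENNReal.ofReal p.1 • S.indicator
      (fun z : ℝ × ℝ => gaussianPDF 0 1 z.1 * gaussianPDF 0 1 z.2) (polarCoord.symm p)
      = (ENNReal.ofReal p.1 * (gaussianPDF 0 1 p.1 * gaussianPDF 0 1 0)) * A.indicator 1 p.2 := by
    rintro ⟨r, θ⟩ ⟨hr, hθ⟩
    have := h r θ hr hθ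
    simp only [polarCoord_symm_apply, smul_eq_mul]
    by_cases hh : θ ∈ A
    · rw [Set.indicator_of_mem (this.2 hh), Set.indicator_of_mem hh, pdf_polar]; simp
    · rw [Set.indicator_of_notMem (fun q => hh (this.1 q)), Set.indicator_of_notMem hh]; simp
  rw [setLIntegral_congr_fun polarCoord.open_target.measurableSet e, polarCoord_target,
    Measure.volume_eq_prod, ← Measure.prod_restrict,
    lintegral_prod_mul (f := fun r => ENNReal.ofReal r * (gaussianPDF 0 1 r * gaussianPDF 0 1 0))
      (by fun_prop) ((measurable_one.indicator hA).aemeasurable)]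
  congr 1
  rw [lintegral_indicator_one hA, Measure.restrict_apply hA]

lemma gg_cone (a : ℝ) (h0 : 0 ≤ a) (h1 : a ≤ Real.pi / 2) :
    gg {z | Real.sin a * |z.2| < Real.cos a * z.1} = ENNReal.ofReal (1 / 2 - a / Real.pi) := by
  have hpi := Real.pi_pos
  have key := gg_polar Set.univ MeasurableSet.univ Set.univ MeasurableSet.univ (by simp)
  rw [gg_polar _ (measurableSet_lt (by fun_prop) (by fun_prop))
    (Set.Ioo (-(Real.pi/2 - a)) (Real.pi/2 - a)) measurableSet_Ioo]
  · rw [Set.inter_eq_left.2 (Set.Ioo_subset_Ioo (by linarith) (by linarith))]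
    rw [measure_univ, Set.univ_inter] at key
    set C := (∫⁻ r in Set.Ioi (0:ℝ), ENNReal.ofReal r * (gaussianPDF 0 1 r * gaussianPDF 0 1 0))
    rw [Real.volume_Ioo] at key ⊢
    have : C = ENNReal.ofReal (1 / (2 * Real.pi)) := by
      rw [show Real.pi - -Real.pi = 2 * Real.pi by ring] at key
      rw [one_div, ENNReal.ofReal_inv_of_pos (by positivity)]
      exact ENNReal.eq_inv_of_mul_eq_one_left key.symm
    rw [this, ← ENNReal.ofReal_mul (by positivity)]
    congr 1
    field_simp
    ring
  · intro r θ hr hθ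
    have hs : |Real.sin θ| = Real.sin |θ| := by
      rcases abs_cases θ with ⟨h, h'⟩ | ⟨h, h'⟩
      · rw [h, abs_of_nonneg]; exact Real.sin_nonneg_of_nonneg_of_le_pi h' hθ.2.le
      · rw [h, Real.sin_neg, abs_of_nonpos]
        exact Real.sin_nonpos_of_nonpos_of_neg_pi_le h'.le hθ.1.le
    have habs : |θ| < Real.pi := abs_lt.2 hθ
    simp only [Set.mem_ofPred_eq, Set.mem_Ioo]
    rw [abs_mul, abs_of_pos hr, hs, ← Real.cos_abs θ, ← abs_lt]
    have e : Real.cos (a + |θ|) = Real.cos a * Real.cos |θ| - Real.sin a * Real.sin |θ| :=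
      Real.cos_add _ _
    have n0 := abs_nonneg θ
    constructor
    · intro h
      by_contra hc
      have : Real.cos (a + |θ|) ≤ 0 :=
        Real.cos_nonpos_of_pi_div_two_le_of_le (by linarith) (by linarith)
      nlinarith
    · intro h
      have : 0 < Real.cos (a + |θ|) := Real.cos_pos_of_mem_Ioo ⟨by linarith, by linarith⟩
      nlinarith

lemma chi_sq (b : Bool) : chi b * chi b = 1 := by cases b <;> simp [chi]

abbrev rowMeas (n : ℕ) : Measure (Fin n → ℝ) := Measure.pi fun _ => gaussianReal 0 1

lemma row_indep (n : ℕ) (x : Fin n → Bool) :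
    iIndepFun (fun j (g : Fin n → ℝ) => g j * chi (x j)) (rowMeas n) :=
  iIndepFun_pi (X := fun j (r : ℝ) => r * chi (x j)) (fun j => by fun_prop)

lemma row_single (n : ℕ) (x : Fin n → Bool) (j : Fin n) :
    (rowMeas n).map (fun g => g j * chi (x j)) = gaussianReal 0 1 := by
  have h1 := (measurePreserving_eval (fun _ : Fin n => gaussianReal 0 1) j).map_eq
  have h2 := gaussianReal_map_mul_const (μ := 0) (v := 1) (chi (x j))
  rw [← h1, Measure.map_map (by fun_prop) (by fun_prop)] at h2
  refine Eq.trans (Eq.trans ?_ h2) ?_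
  · rfl
  · congr 1
    · simp
    · ext; simp [pow_two, chi_sq]

lemma row_sum (n : ℕ) (x : Fin n → Bool) (A : Finset (Fin n)) :
    (rowMeas n).map (fun g => ∑ j ∈ A, g j * chi (x j)) = gaussianReal 0 (A.card : NNReal) := by
  classical
  induction A using Finset.induction with
  | empty => simp [Measure.map_const]
  | insert i s hi ih =>
    have hI := (row_indep n x).indepFun_finsetSum_of_notMem (fun j => by fun_prop) hi
    have e1 : (∑ j ∈ s, fun (g : Fin n → ℝ) => g j * chi (x j)) =
      fun g => ∑ j ∈ s, g j * chi (x j) := by ext g; simp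
    rw [e1] at hI
    have := gaussianReal_add_gaussianReal_of_indepFun hI ih (row_single n x i)
    rw [card_insert_of_notMem hi]
    convert this using 1
    · congr 1; ext g; simp [sum_insert hi, add_comm]
    · simp

lemma row_joint (n : ℕ) (x : Fin n → Bool) (A : Finset (Fin n)) (s t : ℝ)
    (hs : s ^ 2 = A.card) (ht : t ^ 2 = (Aᶜ).card) :
    (rowMeas n).map (fun g => (∑ j ∈ A, g j * chi (x j), ∑ j ∈ Aᶜ, g j * chi (x j)))
      = gg.map (fun z => (s * z.1, t * z.2)) := by
  have hI := (row_indep n x).indepFun_finset A Aᶜ disjoint_compl_right (fun j => by fun_prop)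
  have hI2 := hI.comp (φ := fun f => ∑ j, f j) (ψ := fun f => ∑ j, f j)
    (by fun_prop) (by fun_prop)
  have hI3 : IndepFun (fun g : Fin n → ℝ => ∑ j ∈ A, g j * chi (x j))
      (fun g : Fin n → ℝ => ∑ j ∈ Aᶜ, g j * chi (x j)) (rowMeas n) := by
    convert hI2 using 1
    · ext g; simp [Function.comp, ← Finset.sum_coe_sort A]
    · ext g; simp only [Function.comp]; rw [← Finset.sum_coe_sort Aᶜ]
  have m1 : ∀ B : Finset (Fin n), Measurable (fun g : Fin n → ℝ => ∑ j ∈ B, g j * chi (x j)) :=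
    fun B => by fun_prop
  rw [(indepFun_iff_map_prod_eq_prod_map_map (m1 _).aemeasurable (m1 _).aemeasurable).1 hI3, row_sum, row_sum]
  have := Measure.map_prod_map (gaussianReal 0 1) (gaussianReal 0 1)
    (f := fun z => s * z) (g := fun z => t * z) (by fun_prop) (by fun_prop)
  rw [gaussianReal_map_const_mul, gaussianReal_map_const_mul] at this
  rw [show (fun z : ℝ × ℝ => (s * z.1, t * z.2)) = Prod.map (fun z => s * z) (fun z => t * z)
    from rfl, ← this]
  congr 2
  · simp
  · ext; simp [hs]
  · simp
  · ext; simp [ht]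

/-- Hamming distance -/
def hd {n : ℕ} (x y : Fin n → Bool) : ℕ := (univ.filter fun j => ¬ (x j = y j)).card

/-- flip probability -/
def pd (n d : ℕ) : ℝ := Real.arccos (1 - 2 * d / n) / Real.pi

lemma gg_map_neg1 : gg.map (fun z => (-z.1, z.2)) = gg := by
  have := Measure.map_prod_map (gaussianReal 0 1) (gaussianReal 0 1)
    (f := fun z => -z) (g := fun z => z) (by fun_prop) (by fun_prop)
  rw [gaussianReal_map_neg, Measure.map_id', neg_zero] at this
  exact this.symm

lemma gg_swap : gg.map Prod.swap = gg := Measure.prod_swap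

lemma gg_cone2 (a : ℝ) (h0 : 0 ≤ a) (h1 : a ≤ Real.pi / 2) :
    gg {z | Real.sin a * |z.2| < Real.cos a * -z.1} = ENNReal.ofReal (1 / 2 - a / Real.pi) := by
  rw [← gg_cone a h0 h1]
  conv_rhs => rw [← gg_map_neg1]
  rw [Measure.map_apply (by fun_prop) (measurableSet_lt (by fun_prop) (by fun_prop))]
  rfl

lemma gg_cone3 (a : ℝ) (h0 : 0 ≤ a) (h1 : a ≤ Real.pi / 2) :
    gg {z | Real.cos a * |z.1| < Real.sin a * z.2} = ENNReal.ofReal (a / Real.pi) := by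
  have := gg_cone (Real.pi / 2 - a) (by linarith) (by linarith)
  rw [← gg_swap, Measure.map_apply (by fun_prop) (measurableSet_lt (by fun_prop) (by fun_prop)),
    Real.sin_pi_div_two_sub, Real.cos_pi_div_two_sub] at this
  have hpi := Real.pi_pos
  rw [show a / Real.pi = 1 / 2 - (Real.pi / 2 - a) / Real.pi by field_simp; ring, ← this]
  rfl

lemma gg_cone4 (a : ℝ) (h0 : 0 ≤ a) (h1 : a ≤ Real.pi / 2) :
    gg {z | Real.cos a * |z.1| < Real.sin a * -z.2} = ENNReal.ofReal (a / Real.pi) := by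
  have := gg_cone2 (Real.pi / 2 - a) (by linarith) (by linarith)
  rw [← gg_swap, Measure.map_apply (by fun_prop) (measurableSet_lt (by fun_prop) (by fun_prop)),
    Real.sin_pi_div_two_sub, Real.cos_pi_div_two_sub] at this
  have hpi := Real.pi_pos
  rw [show a / Real.pi = 1 / 2 - (Real.pi / 2 - a) / Real.pi by field_simp; ring, ← this]
  rfl

/-- Sheppard's formula in scaled form. -/
lemma gg_quad (a c : ℝ) (h0 : 0 ≤ a) (h1 : a ≤ Real.pi / 2) (hc : 0 < c) (α β : Bool) :
    gg.real {z | decide (0 < c * Real.cos a * z.1 + c * Real.sin a * z.2) = α ∧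
      decide (0 < c * Real.cos a * z.1 - c * Real.sin a * z.2) = β} =
      if α = β then 1 / 2 - a / Real.pi else a / Real.pi := by
  have hpi := Real.pi_pos
  set Q : Bool → Bool → Set (ℝ × ℝ) := fun α β =>
    {z | decide (0 < c * Real.cos a * z.1 + c * Real.sin a * z.2) = α ∧
      decide (0 < c * Real.cos a * z.1 - c * Real.sin a * z.2) = β} with hQ
  have mQ : ∀ α β, MeasurableSet (Q α β) := by
    intro α β
    have m1 : MeasurableSet {z : ℝ × ℝ | 0 < c * Real.cos a * z.1 + c * Real.sin a * z.2} :=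
      measurableSet_lt (by fun_prop) (by fun_prop)
    have m2 : MeasurableSet {z : ℝ × ℝ | 0 < c * Real.cos a * z.1 - c * Real.sin a * z.2} :=
      measurableSet_lt (by fun_prop) (by fun_prop)
    cases α <;> cases β <;> simp only [hQ, decide_eq_true_eq, decide_eq_false_iff_not]
    · exact m1.compl.inter m2.compl
    · exact m1.compl.inter m2
    · exact m1.inter m2.compl
    · exact m1.inter m2
  have hp1 : a / Real.pi ≤ 1 / 2 := by rw [div_le_iff₀ hpi]; linarith
  have hp0 : 0 ≤ a / Real.pi := by positivity
  have hs : 0 ≤ Real.sin a := Real.sin_nonneg_of_nonneg_of_le_pi h0 (by linarith)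
  have hcs : 0 ≤ Real.cos a := Real.cos_nonneg_of_mem_Icc ⟨by linarith, h1⟩
  have aux : ∀ (S T : Set (ℝ × ℝ)) (r : ℝ), 0 ≤ r → gg S = ENNReal.ofReal r → S ⊆ T →
      r ≤ gg.real T := by
    intro S T r hr h hST
    have h2 : gg.real S = r := by rw [measureReal_def, h, ENNReal.toReal_ofReal hr]
    rw [← h2]; exact measureReal_mono hST
  have l1 : 1 / 2 - a / Real.pi ≤ gg.real (Q true true) := by
    refine aux _ _ _ (by linarith) (gg_cone a h0 h1) ?_
    intro z hz
    simp only [Set.mem_ofPred_eq] at hz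
    have k1 := mul_le_mul_of_nonneg_left (le_abs_self z.2) hs
    have k2 := mul_le_mul_of_nonneg_left (neg_abs_le z.2) hs
    simp only [hQ, Set.mem_ofPred_eq, decide_eq_true_eq]
    constructor <;> nlinarith
  have l2 : 1 / 2 - a / Real.pi ≤ gg.real (Q false false) := by
    refine aux _ _ _ (by linarith) (gg_cone2 a h0 h1) ?_
    intro z hz
    simp only [Set.mem_ofPred_eq] at hz
    have k1 := mul_le_mul_of_nonneg_left (le_abs_self z.2) hs
    have k2 := mul_le_mul_of_nonneg_left (neg_abs_le z.2) hs
    simp only [hQ, Set.mem_ofPred_eq, decide_eq_false_iff_not, not_lt]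
    constructor <;> nlinarith
  have l3 : a / Real.pi ≤ gg.real (Q true false) := by
    refine aux _ _ _ (by linarith) (gg_cone3 a h0 h1) ?_
    intro z hz
    simp only [Set.mem_ofPred_eq] at hz
    have k1 := mul_le_mul_of_nonneg_left (le_abs_self z.1) hcs
    have k2 := mul_le_mul_of_nonneg_left (neg_abs_le z.1) hcs
    simp only [hQ, Set.mem_ofPred_eq, decide_eq_false_iff_not, decide_eq_true_eq, not_lt]
    constructor <;> nlinarith
  have l4 : a / Real.pi ≤ gg.real (Q false true) := by
    refine aux _ _ _ (by linarith) (gg_cone4 a h0 h1) ?_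
    intro z hz
    simp only [Set.mem_ofPred_eq] at hz
    have k1 := mul_le_mul_of_nonneg_left (le_abs_self z.1) hcs
    have k2 := mul_le_mul_of_nonneg_left (neg_abs_le z.1) hcs
    simp only [hQ, Set.mem_ofPred_eq, decide_eq_false_iff_not, decide_eq_true_eq, not_lt]
    constructor <;> nlinarith
  have dis : ∀ z α β α' β', z ∈ Q α β → z ∈ Q α' β' → α = α' ∧ β = β' :=
    fun z α β α' β' h h' => ⟨h.1.symm.trans h'.1, h.2.symm.trans h'.2⟩
  have tot : gg.real (Q true true) + gg.real (Q true false) +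
      (gg.real (Q false true) + gg.real (Q false false)) ≤ 1 := by
    rw [← measureReal_union _ (mQ _ _), ← measureReal_union _ (mQ _ _), ← measureReal_union]
    · exact measureReal_le_one
    · rw [Set.disjoint_left]; rintro z (h | h) (h' | h') <;> simpa using dis z _ _ _ _ h h'
    · exact (mQ _ _).union (mQ _ _)
    · rw [Set.disjoint_left]; rintro z h h'; simpa using dis z _ _ _ _ h h'
    · rw [Set.disjoint_left]; rintro z h h'; simpa using dis z _ _ _ _ h h'
  change gg.real (Q α β) = _
  cases α <;> cases β <;> simp <;> linarith

lemma row_quad (n : ℕ) (hn : 0 < n) (x y : Fin n → Bool) (α β : Bool) :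
    (rowMeas n).real {g | decide (0 < ∑ j, g j * chi (x j)) = α ∧
      decide (0 < ∑ j, g j * chi (y j)) = β} =
      1 / 2 * (if α = β then 1 - pd n (hd x y) else pd n (hd x y)) := by
  have hpi := Real.pi_pos
  have hn' : (0:ℝ) < n := by exact_mod_cast hn
  set A : Finset (Fin n) := univ.filter fun j => x j = y j with hA
  have hAc : Aᶜ = univ.filter fun j => ¬ (x j = y j) := by ext; simp [hA]
  have hdc : ((Aᶜ).card : ℝ) = hd x y := by rw [hAc]; rfl
  have hsum : (A.card : ℝ) + (Aᶜ).card = n := by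
    have := Finset.card_add_card_compl A
    rw [Fintype.card_fin] at this
    exact_mod_cast this
  have hdle : (hd x y : ℝ) ≤ n := by rw [← hdc, ← hsum]; simp
  set ρ : ℝ := 1 - 2 * (hd x y : ℝ) / n with hρ
  set a := Real.arccos ρ / 2 with ha
  have hρ1 : ρ ≤ 1 := by rw [hρ]; have : 0 ≤ 2 * (hd x y : ℝ) / n := by positivity
                         linarith
  have hρ2 : -1 ≤ ρ := by
    have : 2 * (hd x y : ℝ) / n ≤ 2 := by rw [div_le_iff₀ hn']; linarith
    rw [hρ]; linarith
  have hcos : Real.cos (2 * a) = ρ := by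
    rw [ha, mul_div_cancel₀ _ (two_ne_zero), Real.cos_arccos hρ2 hρ1]
  have hc2 : Real.cos a ^ 2 = 1 - hd x y / n := by
    rw [Real.cos_two_mul, hρ] at hcos
    linear_combination hcos / 2
  have hs2 : Real.sin a ^ 2 = hd x y / n := by
    rw [Real.sin_sq, hc2]; ring
  have h0 : 0 ≤ a := by have := Real.arccos_nonneg ρ; linarith
  have h1 : a ≤ Real.pi / 2 := by have := Real.arccos_le_pi ρ; linarith
  have hj := row_joint n x A (√n * Real.cos a) (√n * Real.sin a)
    (by rw [mul_pow, Real.sq_sqrt hn'.le, hc2, ← hdc]; field_simp; linarith)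
    (by rw [mul_pow, Real.sq_sqrt hn'.le, hs2, ← hdc]; field_simp)
  have hq := gg_quad a √n h0 h1 (Real.sqrt_pos.2 hn') α β
  set S : Set (ℝ × ℝ) := {z | decide (0 < z.1 + z.2) = α ∧ decide (0 < z.1 - z.2) = β} with hS
  have mS : MeasurableSet S := by
    have m1 : MeasurableSet {z : ℝ × ℝ | 0 < z.1 + z.2} :=
      measurableSet_lt (by fun_prop) (by fun_prop)
    have m2 : MeasurableSet {z : ℝ × ℝ | 0 < z.1 - z.2} :=
      measurableSet_lt (by fun_prop) (by fun_prop)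
    rw [hS]
    cases α <;> cases β <;> simp only [decide_eq_true_eq, decide_eq_false_iff_not]
    · exact m1.compl.inter m2.compl
    · exact m1.compl.inter m2
    · exact m1.inter m2.compl
    · exact m1.inter m2
  have hj2 := congrArg (fun μ : Measure (ℝ × ℝ) => μ.real S) hj
  rw [map_measureReal_apply (by fun_prop) mS, map_measureReal_apply (by fun_prop) mS] at hj2
  have e1 : ∀ g : Fin n → ℝ, ∑ j, g j * chi (x j) =
      ∑ j ∈ A, g j * chi (x j) + ∑ j ∈ Aᶜ, g j * chi (x j) := fun g =>
    (Finset.sum_add_sum_compl A _).symm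
  have e2 : ∀ g : Fin n → ℝ, ∑ j, g j * chi (y j) =
      ∑ j ∈ A, g j * chi (x j) - ∑ j ∈ Aᶜ, g j * chi (x j) := fun g => by
    rw [← Finset.sum_add_sum_compl A, sub_eq_add_neg, ← Finset.sum_neg_distrib]
    congr 1
    · refine sum_congr rfl fun j hj => ?_
      rw [hA, mem_filter] at hj; rw [hj.2]
    · refine sum_congr rfl fun j hj => ?_
      rw [hAc, mem_filter] at hj
      have := hj.2
      cases h1 : x j <;> cases h2 : y j <;> simp_all [chi]
  have : {g : Fin n → ℝ | decide (0 < ∑ j, g j * chi (x j)) = α ∧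
      decide (0 < ∑ j, g j * chi (y j)) = β} =
      (fun g : Fin n → ℝ => (∑ j ∈ A, g j * chi (x j), ∑ j ∈ Aᶜ, g j * chi (x j))) ⁻¹' S := by
    ext g
    simp only [Set.mem_ofPred_eq, Set.mem_preimage, hS, e1, e2]
  rw [this, hj2]
  refine Eq.trans hq ?_
  have : pd n (hd x y) = 2 * a / Real.pi := by
    rw [pd, ha]; congr 1; ring
  rw [this]
  split_ifs <;> ring

abbrev matMeas (n : ℕ) : Measure (Fin n → Fin n → ℝ) := Measure.pi fun _ => rowMeas n

/-- Boolean layer -/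
def bl {n : ℕ} (θ : Fin n → Fin n → ℝ) (x : Fin n → Bool) : Fin n → Bool :=
  fun i => decide (0 < ∑ j, θ i j * chi (x j))

/-- Boolean network -/
def bnet {n : ℕ} (l : List (Fin n → Fin n → ℝ)) (x : Fin n → Bool) : Fin n → Bool :=
  l.foldl (fun y θ => bl θ y) x

lemma layerMap_chi (n : ℕ) (θ : Fin n → Fin n → ℝ) (x : Fin n → Bool) :
    layerMap n θ (fun j => chi (x j)) = fun j => chi (bl θ x j) := by
  funext i
  simp [layerMap, sgn, bl, chi]

lemma foldl_chi {n : ℕ} (l : List (Fin n → Fin n → ℝ)) (x : Fin n → Bool) :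
    l.foldl (fun y θ => layerMap n θ y) (fun j => chi (x j)) = fun j => chi (bnet l x j) := by
  induction l generalizing x with
  | nil => rfl
  | cons a l ih => simp only [List.foldl_cons, layerMap_chi, ih]; rfl

lemma boolOut_eq (n T : ℕ) (h : (Fin n → Bool) → Bool) (Θ : Fin T → Fin n → Fin n → ℝ)
    (ω : Fin n → Bool) : boolOut n T h Θ ω = h (bnet (List.ofFn Θ) ω) := by
  unfold boolOut network
  rw [foldl_chi]
  congr 1
  funext i
  cases hb : bnet (List.ofFn Θ) ω i <;> simp [chi, hb]

lemma measurable_bl {n : ℕ} (x : Fin n → Bool) : Measurable (fun θ => bl θ x) := by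
  refine measurable_pi_lambda _ fun i => measurable_to_bool ?_
  have : (fun θ : Fin n → Fin n → ℝ => bl θ x i) ⁻¹' {true} =
      {θ | 0 < ∑ j, θ i j * chi (x j)} := by
    ext θ; simp [bl]
  rw [this]
  exact measurableSet_lt (by fun_prop) (by fun_prop)

lemma measurable_bnet {n : ℕ} (T : ℕ) (x : Fin n → Bool) :
    Measurable (fun Θ : Fin T → Fin n → Fin n → ℝ => bnet (List.ofFn Θ) x) := by
  induction T generalizing x with
  | zero => simp only [List.ofFn_zero]; exact measurable_const
  | succ T ih =>
    have h1 : Measurable (fun q : (Fin T → Fin n → Fin n → ℝ) × (Fin n → Bool) =>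
        bnet (List.ofFn q.1) q.2) := measurable_from_prod_countable_left fun y => ih y
    have h2 : (fun Θ : Fin (T+1) → Fin n → Fin n → ℝ => bnet (List.ofFn Θ) x) =
      (fun q : (Fin T → Fin n → Fin n → ℝ) × (Fin n → Bool) =>
        bnet (List.ofFn q.1) q.2) ∘ (fun Θ => (fun i => Θ i.succ, bl (Θ 0) x)) := by
      funext Θ; simp [bnet]
    rw [h2]
    exact h1.comp (Measurable.prodMk (by fun_prop) ((measurable_bl x).comp (by fun_prop)))

lemma layer_int (n : ℕ) (hn : 0 < n) (F : (Fin n → Bool) → (Fin n → Bool) → ℝ)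
    (x y : Fin n → Bool) :
    ∫ θ, F (bl θ x) (bl θ y) ∂matMeas n = pairMean n (pd n (hd x y)) F := by
  classical
  set S : (Fin n → Bool) → (Fin n → Bool) → Set (Fin n → Fin n → ℝ) := fun a b =>
    {θ | bl θ x = a ∧ bl θ y = b} with hS
  have mS : ∀ a b, MeasurableSet (S a b) := fun a b =>
    (measurable_bl x (measurableSet_singleton a)).inter
      (measurable_bl y (measurableSet_singleton b))
  have e : ∀ θ, F (bl θ x) (bl θ y) = ∑ a, ∑ b, (S a b).indicator 1 θ * F a b := by
    intro θ
    rw [Finset.sum_eq_single (bl θ x), Finset.sum_eq_single (bl θ y)]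
    · rw [Set.indicator_of_mem (show θ ∈ S (bl θ x) (bl θ y) from ⟨rfl, rfl⟩)]; simp
    · intro b _ hb; rw [Set.indicator_of_notMem (fun h => hb h.2.symm)]; simp
    · simp
    · intro a _ ha
      refine Finset.sum_eq_zero fun b _ => ?_
      rw [Set.indicator_of_notMem (fun h => ha h.1.symm)]; simp
    · simp
  have hi : ∀ a b, Integrable (fun θ => (S a b).indicator (1 : (Fin n → Fin n → ℝ) → ℝ) θ * F a b) (matMeas n) :=
    fun a b => ((integrable_const (1:ℝ)).indicator (mS a b)).mul_const _
  simp_rw [e]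
  rw [integral_finsetSum _ (fun a _ => integrable_finsetSum _ fun b _ => hi a b)]
  unfold pairMean
  refine sum_congr rfl fun a _ => ?_
  rw [integral_finsetSum _ (fun b _ => hi a b)]
  refine sum_congr rfl fun b _ => ?_
  rw [integral_mul_const, integral_indicator_one (mS a b)]
  congr 1
  have : S a b = Set.pi Set.univ (fun i => {g : Fin n → ℝ |
      decide (0 < ∑ j, g j * chi (x j)) = a i ∧ decide (0 < ∑ j, g j * chi (y j)) = b i}) := by
    ext θ
    simp only [hS, Set.mem_ofPred_eq, Set.mem_pi, Set.mem_univ, true_imp_iff, forall_and]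
    rw [funext_iff, funext_iff]; rfl
  rw [this, measureReal_def, Measure.pi_pi, ENNReal.toReal_prod]
  have h2 : ∀ i, ((rowMeas n) {g : Fin n → ℝ |
      decide (0 < ∑ j, g j * chi (x j)) = a i ∧
        decide (0 < ∑ j, g j * chi (y j)) = b i}).toReal = _ := fun i =>
    row_quad n hn x y (a i) (b i)
  rw [Finset.prod_congr rfl fun i _ => h2 i, Finset.prod_mul_distrib]
  simp [pairWeight]

/-- One step Markov operator on functions of pairs -/
def PP (n : ℕ) (F : (Fin n → Bool) → (Fin n → Bool) → ℝ) : (Fin n → Bool) → (Fin n → Bool) → ℝ :=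
  fun x y => pairMean n (pd n (hd x y)) F

instance weight_prob (n T : ℕ) : IsProbabilityMeasure (weightMeas n T) := by
  unfold weightMeas; infer_instance

lemma net_integrable (n T : ℕ) (F : (Fin n → Bool) → (Fin n → Bool) → ℝ)
    (x y : Fin n → Bool) :
    Integrable (fun Θ => F (bnet (List.ofFn Θ) x) (bnet (List.ofFn Θ) y)) (weightMeas n T) := by
  have hm : Measurable (fun q : (Fin n → Bool) × (Fin n → Bool) => F q.1 q.2) :=
    Measurable.of_discrete
  have hm2 := hm.comp ((measurable_bnet T x).prodMk (measurable_bnet T y))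
  refine Integrable.of_bound (C := ∑ a, ∑ b, |F a b|) hm2.aestronglyMeasurable (ae_of_all _ ?_)
  intro Θ
  rw [Real.norm_eq_abs]
  refine le_trans ?_ (Finset.single_le_sum (f := fun a => ∑ b, |F a b|) (fun a _ =>
    Finset.sum_nonneg fun b _ => abs_nonneg _) (mem_univ (bnet (List.ofFn Θ) x)))
  exact Finset.single_le_sum (f := fun b => |F _ b|) (fun a _ => abs_nonneg _)
    (mem_univ (bnet (List.ofFn Θ) y))

lemma net_int (n : ℕ) (hn : 0 < n) (T : ℕ) (F : (Fin n → Bool) → (Fin n → Bool) → ℝ)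
    (x y : Fin n → Bool) :
    ∫ Θ, F (bnet (List.ofFn Θ) x) (bnet (List.ofFn Θ) y) ∂weightMeas n T
      = (PP n)^[T] F x y := by
  induction T generalizing x y with
  | zero => simp [bnet]
  | succ T ih =>
    rw [Function.iterate_succ_apply']
    have hp := ((measurePreserving_piFinSuccAbove
      (fun _ : Fin (T+1) => matMeas n) 0).symm)
    have hint := net_integrable n (T+1) F x y
    change ∫ Θ, _ ∂(Measure.pi fun _ : Fin (T+1) => matMeas n) = _
    change Integrable _ (Measure.pi fun _ : Fin (T+1) => matMeas n) at hint
    rw [← hp.integral_comp']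
    rw [← hp.integrable_comp_emb (MeasurableEquiv.measurableEmbedding _)] at hint
    refine (integral_prod _ hint).trans ?_
    change _ = pairMean n (pd n (hd x y)) ((PP n)^[T] F)
    rw [← layer_int n hn]
    refine integral_congr_ae (ae_of_all _ fun θ => ?_)
    simp only
    rw [← ih]
    refine integral_congr_ae (ae_of_all _ fun Θ => ?_)
    simp [bnet, MeasurableEquiv.piFinSuccAbove_symm_apply, Fin.insertNthEquiv]

lemma pairMean_fst (n : ℕ) (p : ℝ) (g : (Fin n → Bool) → ℝ) :
    pairMean n p (fun x _ => g x) = unifMean n g := by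
  have h : ∀ x : Fin n → Bool, ∑ y : Fin n → Bool, ∏ i, (if x i = y i then 1 - p else p) = 1 := by
    intro x
    have := Finset.prod_univ_sum (fun _ : Fin n => (univ : Finset Bool))
      (fun i c => if x i = c then 1 - p else p)
    rw [Fintype.piFinset_univ] at this
    rw [← this]
    refine Finset.prod_eq_one fun i _ => ?_
    cases x i <;> simp
  unfold pairMean unifMean pairWeight
  rw [Finset.sum_div]
  refine sum_congr rfl fun x _ => ?_
  rw [← Finset.sum_mul, ← Finset.mul_sum, h]
  simp; ring

lemma unifMean_const (n : ℕ) (c : ℝ) : unifMean n (fun _ => c) = c := by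
  simp [unifMean]

lemma pairMean_const (n : ℕ) (p c : ℝ) : pairMean n p (fun _ _ => c) = c := by
  rw [pairMean_fst n p (fun _ => c), unifMean_const]

lemma PP_iter_const (n T : ℕ) (c : ℝ) : (PP n)^[T] (fun _ _ => c) = fun _ _ => c := by
  induction T with
  | zero => rfl
  | succ T ih =>
    rw [Function.iterate_succ_apply]
    have : PP n (fun _ _ => c) = fun _ _ => c := by
      funext x y; exact pairMean_const _ _ _
    rw [this, ih]

lemma annealed_eq (n : ℕ) (hn : 0 < n) (T : ℕ) (ε : ℝ) (h : (Fin n → Bool) → Bool) :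
    annealedCov n (T + 1) ε h =
      pairMean n ε ((PP n)^[T + 1] (fun x y => chi (h x) * chi (h y)))
        - unifMean n (fun x => chi (h x)) ^ 2 := by
  unfold annealedCov
  congr 1
  · simp only [netOut, boolOut_eq, pairMean]
    have hi := fun x y => net_integrable n (T+1) (fun x y => chi (h x) * chi (h y)) x y
    rw [integral_finsetSum _ (fun a _ => integrable_finsetSum _ fun b _ => (hi a b).const_mul _)]
    refine sum_congr rfl fun a _ => ?_
    rw [integral_finsetSum _ (fun b _ => (hi a b).const_mul _)]
    refine sum_congr rfl fun b _ => ?_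
    rw [integral_const_mul]
    congr 1
    exact net_int n hn (T+1) (fun x y => chi (h x) * chi (h y)) a b
  · congr 1
    unfold unifMean
    simp only [netOut, boolOut_eq]
    have hi := fun x => net_integrable n (T+1) (fun x _ => chi (h x)) x x
    rw [integral_div, integral_finsetSum _ (fun a _ => hi a)]
    have h2 : ∀ x, ∫ Θ, chi (h (bnet (List.ofFn Θ) x)) ∂weightMeas n (T+1) =
        unifMean n (fun x => chi (h x)) := by
      intro x
      rw [net_int n hn (T+1) (fun x _ => chi (h x)) x x, Function.iterate_succ_apply]
      have : PP n (fun x _ => chi (h x)) = fun _ _ => unifMean n (fun x => chi (h x)) := by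
        funext x y; exact pairMean_fst _ _ _
      rw [this, PP_iter_const]
    rw [Finset.sum_congr rfl fun x _ => h2 x]
    exact unifMean_const n (unifMean n (fun x => chi (h x)))

/-- Walsh character -/
def wal {n : ℕ} (S : Finset (Fin n)) (x : Fin n → Bool) : ℝ := ∏ i ∈ S, chi (x i)

lemma pairWeight_fourier (n : ℕ) (p : ℝ) (x y : Fin n → Bool) :
    pairWeight n p x y = (1 / 2) ^ n * (1 / 2) ^ n *
      ∑ S : Finset (Fin n), (1 - 2 * p) ^ S.card * (wal S x * wal S y) := by
  unfold pairWeight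
  have h : ∀ i, (if x i = y i then 1 - p else p) =
      1 / 2 * (1 + (1 - 2 * p) * (chi (x i) * chi (y i))) := by
    intro i
    cases x i <;> cases y i <;> simp [chi] <;> ring
  rw [Finset.prod_congr rfl fun i _ => h i, Finset.prod_mul_distrib, Finset.prod_one_add]
  simp only [Finset.prod_mul_distrib, Finset.prod_const, Finset.powerset_univ, wal,
    Finset.card_univ, Fintype.card_fin]
  ring

lemma pairMean_fourier (n : ℕ) (p : ℝ) (g : (Fin n → Bool) → ℝ) :
    pairMean n p (fun x y => g x * g y) =
      ∑ S : Finset (Fin n), (1 - 2 * p) ^ S.card * unifMean n (fun x => g x * wal S x) ^ 2 := by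
  have h : ∀ S : Finset (Fin n), unifMean n (fun x => g x * wal S x) ^ 2 =
      (1 / 2) ^ n * (1 / 2) ^ n * ∑ x, ∑ y, (g x * wal S x) * (g y * wal S y) := by
    intro S
    rw [unifMean, ← Finset.sum_mul_sum]
    rw [div_eq_mul_inv, one_div, inv_pow]
    ring
  simp_rw [h, pairMean, pairWeight_fourier, Finset.mul_sum, Finset.sum_mul]
  conv_lhs => enter [2, x]; rw [Finset.sum_comm]
  rw [Finset.sum_comm]
  refine sum_congr rfl fun S _ => sum_congr rfl fun x _ => sum_congr rfl fun y _ => ?_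
  ring

lemma pairMean_zero (n : ℕ) (g : (Fin n → Bool) → ℝ) (hg : ∀ x, g x * g x = 1) :
    pairMean n 0 (fun x y => g x * g y) = 1 := by
  rw [← pairMean_const n 0 1]
  unfold pairMean
  refine sum_congr rfl fun x _ => sum_congr rfl fun y _ => ?_
  by_cases h : x = y
  · subst h; simp only [hg]
  · have : pairWeight n 0 x y = 0 := by
      obtain ⟨i, hi⟩ := Function.ne_iff.1 h
      unfold pairWeight
      rw [Finset.prod_eq_zero (mem_univ i) (by simp [hi]), mul_zero]
    rw [this]; simp

lemma cov_bound (n : ℕ) (p : ℝ) (h0 : 0 ≤ p) (h1 : p ≤ 1) (g : (Fin n → Bool) → ℝ)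
    (hg : ∀ x, g x * g x = 1) :
    |pairMean n p (fun x y => g x * g y) - unifMean n g ^ 2| ≤ |1 - 2 * p| := by
  have hP := pairMean_zero n g hg
  rw [pairMean_fourier] at hP ⊢
  have he : unifMean n (fun x => g x * wal ∅ x) = unifMean n g := by simp [wal]
  rw [← Finset.add_sum_erase univ _ (mem_univ (∅ : Finset (Fin n)))] at hP ⊢
  simp only [mul_zero, sub_zero, one_pow, one_mul, card_empty, pow_zero, he] at hP ⊢
  rw [add_sub_cancel_left]
  have hr : |1 - 2 * p| ≤ 1 := abs_le.2 ⟨by linarith, by linarith⟩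
  calc _ ≤ ∑ S ∈ univ.erase (∅ : Finset (Fin n)),
        |(1 - 2 * p) ^ S.card * unifMean n (fun x => g x * wal S x) ^ 2| :=
        Finset.abs_sum_le_sum_abs _ _
    _ ≤ ∑ S ∈ univ.erase (∅ : Finset (Fin n)),
        |1 - 2 * p| * unifMean n (fun x => g x * wal S x) ^ 2 := by
        refine Finset.sum_le_sum fun S hS => ?_
        rw [abs_mul, abs_pow, abs_of_nonneg (sq_nonneg (unifMean n _))]
        refine mul_le_mul_of_nonneg_right ?_ (sq_nonneg _)
        have : S.card ≠ 0 := by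
          rw [Finset.card_ne_zero]
          exact Finset.nonempty_iff_ne_empty.2 (Finset.ne_of_mem_erase hS)
        exact pow_le_of_le_one (abs_nonneg _) hr this
    _ ≤ |1 - 2 * p| := by
        rw [← Finset.mul_sum]
        refine mul_le_of_le_one_right (abs_nonneg _) ?_
        have := sq_nonneg (unifMean n g)
        linarith

/-- binomial expectation -/
def bin (n : ℕ) (p : ℝ) (G : ℕ → ℝ) : ℝ :=
  ∑ k ∈ range (n + 1), (n.choose k : ℝ) * (p ^ k * (1 - p) ^ (n - k)) * G k

lemma sum_hd (n : ℕ) (x : Fin n → Bool) (φ : ℕ → ℝ) :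
    ∑ y, φ (hd x y) = ∑ k ∈ range (n + 1), (n.choose k : ℝ) * φ k := by
  have h1 := Finset.sum_powerset_apply_card φ (x := (univ : Finset (Fin n)))
  simp only [Finset.powerset_univ, card_univ, Fintype.card_fin, nsmul_eq_mul] at h1
  rw [← h1]
  refine Finset.sum_bij' (fun y _ => univ.filter fun j => ¬ (x j = y j))
    (fun S _ j => if j ∈ S then !(x j) else x j) (by simp) (by simp) ?_ ?_ ?_
  · intro y _; funext j
    by_cases h : x j = y j
    · simp [h]
    · simp only [mem_filter, mem_univ, true_and, h, not_false_iff, if_true]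
      revert h; cases x j <;> cases y j <;> simp
  · intro S _; ext j
    by_cases h : j ∈ S <;> simp [h]
  · intro y _; rfl

lemma hd_le {n : ℕ} (x y : Fin n → Bool) : hd x y ≤ n := by
  have := Finset.card_le_univ (univ.filter fun j => ¬ (x j = y j))
  simpa [hd] using this

lemma pairWeight_hd (n : ℕ) (p : ℝ) (x y : Fin n → Bool) :
    pairWeight n p x y = (1 / 2) ^ n * (p ^ hd x y * (1 - p) ^ (n - hd x y)) := by
  unfold pairWeight
  rw [Finset.prod_ite, Finset.prod_const, Finset.prod_const]
  have : (univ.filter fun j => x j = y j).card = n - hd x y := by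
    have := Finset.card_filter_add_card_filter_not (s := (univ : Finset (Fin n)))
      (fun j => x j = y j)
    simp only [card_univ, Fintype.card_fin] at this
    unfold hd; omega
  rw [this, mul_comm (p ^ _)]; rfl

lemma pairMean_hd (n : ℕ) (p : ℝ) (G : ℕ → ℝ) :
    pairMean n p (fun x y => G (hd x y)) = bin n p G := by
  unfold pairMean
  simp_rw [pairWeight_hd]
  rw [Finset.sum_congr rfl fun x _ => sum_hd n x
    (fun k => (1 / 2) ^ n * (p ^ k * (1 - p) ^ (n - k)) * G k)]
  rw [Finset.sum_const, card_univ, Fintype.card_fun, Fintype.card_bool, Fintype.card_fin]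
  unfold bin
  rw [nsmul_eq_mul, Finset.mul_sum]
  refine sum_congr rfl fun k _ => ?_
  push_cast
  have : (2:ℝ)^n * (1/2)^n = 1 := by rw [← mul_pow]; norm_num
  linear_combination (n.choose k : ℝ) * (p ^ k * (1 - p) ^ (n - k)) * G k * this

/-- one-step operator on the distance chain -/
def QQ (n : ℕ) (G : ℕ → ℝ) : ℕ → ℝ := fun d => bin n (pd n d) G

lemma PP_iter_hd (n t : ℕ) (G : ℕ → ℝ) :
    (PP n)^[t] (fun x y => G (hd x y)) = fun x y => (QQ n)^[t] G (hd x y) := by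
  induction t generalizing G with
  | zero => rfl
  | succ t ih =>
    rw [Function.iterate_succ_apply, Function.iterate_succ_apply, ← ih]
    congr 1
    funext x y
    exact pairMean_hd _ _ _

lemma pd_nonneg (n d : ℕ) : 0 ≤ pd n d := div_nonneg (Real.arccos_nonneg _) Real.pi_pos.le
lemma pd_le_one (n d : ℕ) : pd n d ≤ 1 :=
  (div_le_one Real.pi_pos).2 (Real.arccos_le_pi _)

lemma pairWeight_nonneg (n : ℕ) (p : ℝ) (h0 : 0 ≤ p) (h1 : p ≤ 1) (x y : Fin n → Bool) :
    0 ≤ pairWeight n p x y := by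
  rw [pairWeight_hd]
  have : 0 ≤ 1 - p := by linarith
  positivity

lemma pairMean_mono (n : ℕ) (p : ℝ) (h0 : 0 ≤ p) (h1 : p ≤ 1)
    (F G : (Fin n → Bool) → (Fin n → Bool) → ℝ) (h : ∀ x y, F x y ≤ G x y) :
    pairMean n p F ≤ pairMean n p G :=
  Finset.sum_le_sum fun x _ => Finset.sum_le_sum fun y _ =>
    mul_le_mul_of_nonneg_left (h x y) (pairWeight_nonneg n p h0 h1 x y)

lemma PP_iter_mono (n t : ℕ) (F G : (Fin n → Bool) → (Fin n → Bool) → ℝ)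
    (h : ∀ x y, F x y ≤ G x y) (x y : Fin n → Bool) :
    (PP n)^[t] F x y ≤ (PP n)^[t] G x y := by
  induction t generalizing F G with
  | zero => exact h x y
  | succ t ih =>
    exact ih _ _ fun x y => pairMean_mono n _ (pd_nonneg _ _) (pd_le_one _ _) _ _ h

lemma pairMean_affine (n : ℕ) (p c s : ℝ) (F : (Fin n → Bool) → (Fin n → Bool) → ℝ) :
    pairMean n p (fun x y => c + s * F x y) = c + s * pairMean n p F := by
  have := pairMean_const n p c
  nth_rewrite 2 [← this]
  unfold pairMean
  simp only [Finset.mul_sum, ← Finset.sum_add_distrib]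
  refine sum_congr rfl fun x _ => sum_congr rfl fun y _ => ?_
  ring

lemma PP_iter_affine (n t : ℕ) (c s : ℝ) (F : (Fin n → Bool) → (Fin n → Bool) → ℝ) :
    (PP n)^[t] (fun x y => c + s * F x y) = fun x y => c + s * (PP n)^[t] F x y := by
  induction t generalizing F with
  | zero => rfl
  | succ t ih =>
    rw [Function.iterate_succ_apply, Function.iterate_succ_apply, ← ih]
    congr 1
    funext x y
    exact pairMean_affine _ _ _ _ _

/-- law of the distance chain at time `t`, as a functional -/
def mm (n : ℕ) (ε : ℝ) (t : ℕ) (G : ℕ → ℝ) : ℝ := bin n ε ((QQ n)^[t] G)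

lemma annealed_le (n : ℕ) (hn : 0 < n) (T : ℕ) (ε : ℝ) (h0 : 0 ≤ ε) (h1 : ε ≤ 1)
    (h : (Fin n → Bool) → Bool) :
    |annealedCov n (T + 1) ε h| ≤ mm n ε T (fun d => |1 - 2 * pd n d|) := by
  rw [annealed_eq n hn]
  set c := unifMean n (fun x => chi (h x)) ^ 2
  set F := PP n (fun x y => chi (h x) * chi (h y)) with hF
  have hb : ∀ x y, |F x y - c| ≤ |1 - 2 * pd n (hd x y)| := fun x y =>
    cov_bound n _ (pd_nonneg _ _) (pd_le_one _ _) _ (fun x => chi_sq _)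
  have e : ∀ s : ℝ, pairMean n ε ((PP n)^[T] (fun x y => c + s * |1 - 2 * pd n (hd x y)|)) =
      c + s * mm n ε T (fun d => |1 - 2 * pd n d|) := by
    intro s
    rw [PP_iter_affine, pairMean_affine, PP_iter_hd n T (fun d => |1 - 2 * pd n d|),
      pairMean_hd n ε ((QQ n)^[T] (fun d => |1 - 2 * pd n d|))]
    rfl
  rw [Function.iterate_succ_apply]
  rw [abs_le]
  constructor
  · have := pairMean_mono n ε h0 h1 _ _ (PP_iter_mono n T (fun x y => c + (-1) *
      |1 - 2 * pd n (hd x y)|) F (fun x y => by have := (abs_le.1 (hb x y)).1; linarith))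
    rw [e] at this
    linarith
  · have := pairMean_mono n ε h0 h1 _ _ (PP_iter_mono n T F (fun x y => c + 1 *
      |1 - 2 * pd n (hd x y)|) (fun x y => by have := (abs_le.1 (hb x y)).2; linarith))
    rw [e] at this
    linarith

lemma cos_pd (n d : ℕ) (hn : 0 < n) (hd : d ≤ n) : Real.cos (Real.pi * pd n d) = 1 - 2 * d / n := by
  have hn' : (0:ℝ) < n := by exact_mod_cast hn
  have hd' : (d:ℝ) ≤ n := by exact_mod_cast hd
  rw [pd, mul_div_cancel₀ _ Real.pi_pos.ne', Real.cos_arccos]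
  · have : 2 * (d:ℝ) / n ≤ 2 := by rw [div_le_iff₀ hn']; linarith
    linarith
  · have : 0 ≤ 2 * (d:ℝ) / n := by positivity
    linarith

lemma pd_flip (n d : ℕ) (hn : 0 < n) (hd : d ≤ n) : pd n (n - d) = 1 - pd n d := by
  have hn' : (0:ℝ) < n := by exact_mod_cast hn
  unfold pd
  rw [Nat.cast_sub hd, show 1 - 2 * ((n:ℝ) - d) / n = -(1 - 2 * d / n) by field_simp; ring,
    Real.arccos_neg, sub_div, div_self Real.pi_pos.ne']

lemma pd_lower (n d : ℕ) (hn : 0 < n) (hd : d ≤ n) : 4 * (d:ℝ) / n ≤ pd n d ∨ 1 / 10 ≤ pd n d := by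
  have hn' : (0:ℝ) < n := by exact_mod_cast hn
  have hc := cos_pd n d hn hd
  have h0 := pd_nonneg n d
  have h1 := Real.one_sub_sq_div_two_le_cos (x := Real.pi * pd n d)
  set x : ℝ := d / n with hx
  have hx0 : 0 ≤ x := by positivity
  have e1 : 2 * (d:ℝ) / n = 2 * x := by rw [hx]; ring
  have e2 : 4 * (d:ℝ) / n = 4 * x := by rw [hx]; ring
  rw [hc, e1] at h1
  rw [e2]
  have hpi : Real.pi ^ 2 < 10 := by nlinarith [Real.pi_lt_d2, Real.pi_pos]
  have key : 2 / 5 * x ≤ pd n d ^ 2 := by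
    have : (Real.pi * pd n d)^2 = Real.pi^2 * pd n d ^ 2 := by ring
    nlinarith [sq_nonneg (pd n d)]
  rcases le_total x (1/40) with h | h
  · left
    apply le_of_sq_le_sq _ h0
    nlinarith
  · right
    apply le_of_sq_le_sq _ h0
    nlinarith

lemma sin_phi (n d : ℕ) (hn : 0 < n) (hd : d ≤ n) :
    Real.sin (Real.pi / 2 * |1 - 2 * pd n d|) = |1 - 2 * (d:ℝ) / n| := by
  have hc := cos_pd n d hn hd
  have h0 := pd_nonneg n d
  have h1 := pd_le_one n d
  have e : Real.sin (Real.pi / 2 * (1 - 2 * pd n d)) = 1 - 2 * (d:ℝ) / n := by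
    rw [← hc, ← Real.sin_pi_div_two_sub]; congr 1; ring
  have hpi := Real.pi_pos
  rcases abs_cases (1 - 2 * pd n d) with ⟨h, h'⟩ | ⟨h, h'⟩
  · rw [h, ← e, abs_of_nonneg]
    exact Real.sin_nonneg_of_nonneg_of_le_pi (by positivity) (by nlinarith)
  · rw [h, mul_neg, Real.sin_neg, e, abs_of_nonpos]
    rw [← e]
    exact Real.sin_nonpos_of_nonpos_of_neg_pi_le (by nlinarith) (by nlinarith)

lemma abs_phi_le_one (n d : ℕ) : |1 - 2 * pd n d| ≤ 1 := by
  have h0 := pd_nonneg n d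
  have h1 := pd_le_one n d
  exact abs_le.2 ⟨by linarith, by linarith⟩

lemma phi_le (n d : ℕ) (hn : 0 < n) (hd : d ≤ n) :
    |1 - 2 * pd n d| ≤ |1 - 2 * (d:ℝ) / n| := by
  rw [← sin_phi n d hn hd]
  have h1 := abs_phi_le_one n d
  have hpi := Real.pi_pos
  have := Real.mul_le_sin (x := Real.pi / 2 * |1 - 2 * pd n d|) (by positivity) (by nlinarith)
  refine le_trans (le_of_eq ?_) this
  field_simp

lemma phi_strict (α : ℝ) (h0 : 0 < α) (h1 : α < 1 / 2) :
    ∃ γ : ℝ, 0 < γ ∧ γ < 1 ∧ ∀ n d : ℕ, 0 < n → d ≤ n → |1 - 2 * (d:ℝ) / n| ≤ 1 - 2 * α →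
      (1 - 2 * pd n d) ^ 2 ≤ γ * (1 - 2 * (d:ℝ) / n) ^ 2 := by
  have hpi := Real.pi_pos
  set y := Real.arcsin (1 - 2 * α) with hy
  have hsin : Real.sin y = 1 - 2 * α := Real.sin_arcsin (by linarith) (by linarith)
  have y0 : 0 < y := Real.arcsin_pos.2 (by linarith)
  have y1 : y < Real.pi / 2 := Real.arcsin_lt_pi_div_two.2 (by linarith)
  have hlt := Real.mul_lt_sin y0 y1
  rw [hsin] at hlt
  have hpos : 0 < 1 - 2 * α := by linarith
  set c := 2 / Real.pi * y / (1 - 2 * α) with hc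
  have c0 : 0 < c := by positivity
  have c1 : c < 1 := (div_lt_one hpos).2 hlt
  refine ⟨c ^ 2, by positivity, by nlinarith, ?_⟩
  intro n d hn hd hr
  rw [← sq_abs (1 - 2 * pd n d), ← sq_abs (1 - 2 * (d:ℝ) / n), ← mul_pow]
  refine pow_le_pow_left₀ (abs_nonneg _) ?_ 2
  have hs := sin_phi n d hn hd
  have hf1 := abs_phi_le_one n d
  set f := |1 - 2 * pd n d|
  have hf0 : 0 ≤ f := abs_nonneg _
  rw [← hs] at hr ⊢
  set z := Real.pi / 2 * f with hz
  have hfz : f = 2 / Real.pi * z := by rw [hz]; field_simp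
  have hz0 : 0 ≤ z := by positivity
  have hz1 : z ≤ Real.pi / 2 := by nlinarith
  have hzy : z ≤ y := by
    by_contra hcon
    push Not at hcon
    have := Real.sin_lt_sin_of_lt_of_le_pi_div_two (by linarith) hz1 hcon
    linarith
  have conc := strictConcaveOn_sin_Icc.concaveOn.2
    (show (0:ℝ) ∈ Set.Icc 0 Real.pi from ⟨le_rfl, hpi.le⟩)
    (show y ∈ Set.Icc 0 Real.pi from ⟨y0.le, by linarith⟩)
    (show 0 ≤ 1 - z / y from by
      have : z / y ≤ 1 := (div_le_one y0).2 hzy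
      linarith) (show 0 ≤ z / y from by positivity) (by ring)
  simp only [smul_eq_mul, Real.sin_zero, mul_zero, zero_add, hsin] at conc
  rw [div_mul_cancel₀ _ y0.ne'] at conc
  calc f = c * (z / y * (1 - 2 * α)) := by rw [hfz, hc]; field_simp
    _ ≤ c * Real.sin z := mul_le_mul_of_nonneg_left conc c0.le

lemma bin_w_nonneg (n k : ℕ) (p : ℝ) (h0 : 0 ≤ p) (h1 : p ≤ 1) :
    0 ≤ (n.choose k : ℝ) * (p ^ k * (1 - p) ^ (n - k)) := by
  have : 0 ≤ 1 - p := by linarith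
  positivity

lemma bin_mono (n : ℕ) (p : ℝ) (h0 : 0 ≤ p) (h1 : p ≤ 1) (F G : ℕ → ℝ)
    (h : ∀ k ≤ n, F k ≤ G k) : bin n p F ≤ bin n p G :=
  Finset.sum_le_sum fun k hk => mul_le_mul_of_nonneg_left
    (h k (Nat.lt_succ_iff.1 (mem_range.1 hk))) (bin_w_nonneg n k p h0 h1)

lemma bin_add (n : ℕ) (p : ℝ) (F G : ℕ → ℝ) :
    bin n p (fun k => F k + G k) = bin n p F + bin n p G := by
  unfold bin; rw [← Finset.sum_add_distrib]; exact sum_congr rfl fun k _ => by ring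

lemma bin_smul (n : ℕ) (p c : ℝ) (F : ℕ → ℝ) :
    bin n p (fun k => c * F k) = c * bin n p F := by
  unfold bin; rw [Finset.mul_sum]; exact sum_congr rfl fun k _ => by ring

lemma bin_const (n : ℕ) (p c : ℝ) : bin n p (fun _ => c) = c := by
  unfold bin
  rw [← Finset.sum_mul]
  have := add_pow p (1 - p) n
  rw [add_sub_cancel, one_pow] at this
  rw [Finset.sum_congr rfl (g := fun m => p ^ m * (1 - p) ^ (n - m) * (n.choose m : ℝ))
    (fun k _ => by ring), ← this, one_mul]

lemma bin_flip (n : ℕ) (p : ℝ) (G : ℕ → ℝ) :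
    bin n p (fun k => G (n - k)) = bin n (1 - p) G := by
  unfold bin
  rw [← Finset.sum_range_reflect]
  refine sum_congr rfl fun k hk => ?_
  have hk : k ≤ n := Nat.lt_succ_iff.1 (mem_range.1 hk)
  simp only [Nat.add_sub_cancel, Nat.choose_symm hk, Nat.sub_sub_self hk, sub_sub_cancel]
  ring

lemma bin_exp (n : ℕ) (p : ℝ) (h0 : 0 ≤ p) (h1 : p ≤ 1) :
    bin n p (fun k => Real.exp (-k)) ≤ Real.exp (-(n * p) / 2) := by
  have e : bin n p (fun k => Real.exp (-k)) = (p * Real.exp (-1) + (1 - p)) ^ n := by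
    rw [add_pow]
    unfold bin
    refine sum_congr rfl fun k _ => ?_
    rw [mul_pow, ← Real.exp_nat_mul, mul_neg_one]; ring
  rw [e]
  have he : Real.exp (-1) ≤ 1 / 2 := by
    rw [Real.exp_neg, inv_eq_one_div]
    exact one_div_le_one_div_of_le two_pos (by have := Real.add_one_le_exp (1:ℝ); linarith)
  have h2 : p * Real.exp (-1) + (1 - p) ≤ Real.exp (-p / 2) := by
    have := Real.add_one_le_exp (-p / 2)
    nlinarith
  calc _ ≤ Real.exp (-p / 2) ^ n := by
        refine pow_le_pow_left₀ ?_ h2 n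
        have := Real.exp_pos (-1); nlinarith
    _ = _ := by rw [← Real.exp_nat_mul]; congr 1; ring

/-- the inverse-distance potential -/
def G1 (k : ℕ) : ℝ := if k = 0 then 0 else 1 / ((k:ℝ) + 1)

lemma G1_nonneg (k : ℕ) : 0 ≤ G1 k := by unfold G1; split_ifs <;> positivity

lemma bin_G1 (n : ℕ) (p : ℝ) (h0 : 0 < p) (h1 : p ≤ 1) :
    bin n p G1 ≤ 1 / ((n + 1) * p) := by
  rw [le_div_iff₀ (by positivity)]
  have h1p : 0 ≤ 1 - p := by linarith
  calc bin n p G1 * ((n+1) * p) ≤ bin n p (fun k => 1 / ((k:ℝ)+1)) * ((n+1) * p) := by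
        refine mul_le_mul_of_nonneg_right (bin_mono n p h0.le h1 _ _ fun k _ => ?_) (by positivity)
        unfold G1; split_ifs
        · positivity
        · exact le_rfl
    _ = ∑ k ∈ range (n + 1), p ^ (k+1) * (1 - p) ^ (n + 1 - (k + 1)) *
          ((n+1).choose (k+1) : ℝ) := by
        unfold bin
        rw [Finset.sum_mul]
        refine sum_congr rfl fun k _ => ?_
        have hc : ((n:ℝ) + 1) * n.choose k = (n+1).choose (k+1) * ((k:ℝ)+1) := by
          exact_mod_cast Nat.add_one_mul_choose_eq n k
        have hk : (k:ℝ) + 1 ≠ 0 := by positivity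
        rw [Nat.add_sub_add_right]
        field_simp
        rw [pow_succ]
        linear_combination (p ^ k * (1 - p) ^ (n - k) * p) * hc
    _ ≤ (p + (1 - p)) ^ (n + 1) := by
        rw [add_pow, Finset.sum_range_succ' _ (n+1)]
        simp only [pow_zero, Nat.choose_zero_right]
        have : 0 ≤ 1 * (1 - p) ^ (n + 1 - 0) * ((1:ℕ):ℝ) := by positivity
        linarith
    _ = 1 := by rw [add_sub_cancel, one_pow]

lemma bin_R (n : ℕ) (hn : 0 < n) (p : ℝ) :
    bin n p (fun k => (1 - 2 * (k:ℝ) / n) ^ 2) ≤ (1 - 2 * p) ^ 2 + 1 / n := by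
  have hn' : (0:ℝ) < n := by exact_mod_cast hn
  have hm := congrArg (Polynomial.eval p) (bernsteinPolynomial.sum_smul ℝ n)
  have hv := congrArg (Polynomial.eval p) (bernsteinPolynomial.variance ℝ n)
  simp only [Polynomial.eval_finsetSum, bernsteinPolynomial, Polynomial.eval_mul,
    Polynomial.eval_pow, Polynomial.eval_sub, Polynomial.eval_X, Polynomial.eval_one,
    Polynomial.eval_natCast, nsmul_eq_mul] at hm hv
  have hM : bin n p (fun k => (k:ℝ)) = n * p := by
    rw [← hm]; exact sum_congr rfl fun k _ => by ring
  have hV : bin n p (fun k => (n * p - (k:ℝ)) ^ 2) = n * p * (1 - p) := by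
    rw [← hv]; exact sum_congr rfl fun k _ => by ring
  have e : bin n p (fun k => (1 - 2 * (k:ℝ) / n) ^ 2) =
      bin n p (fun k => ((1 - 2 * p)^2 + 4 * (1 - 2 * p) * p) + ((-4 * (1 - 2 * p) / n) * (k:ℝ) +
        4 / n ^ 2 * (n * p - (k:ℝ)) ^ 2)) := by
    congr 1; funext k; field_simp; ring
  rw [e, bin_add n p (fun _ => (1-2*p)^2 + 4*(1-2*p)*p)
    (fun k => -4*(1-2*p)/n*(k:ℝ) + 4/n^2*(n*p-(k:ℝ))^2), bin_const,
    bin_add n p (fun k => -4*(1-2*p)/n*(k:ℝ)) (fun k => 4/n^2*(n*p-(k:ℝ))^2),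
    bin_smul n p _ (fun k => (k:ℝ)), bin_smul n p _ (fun k => (n*p-(k:ℝ))^2), hM, hV]
  have : (1 - 2 * p)^2 + 4 * (1 - 2 * p) * p + (-4 * (1 - 2 * p) / n * (n * p) +
      4 / n ^ 2 * (n * p * (1 - p))) = (1 - 2 * p) ^ 2 + 4 * p * (1 - p) / n := by
    field_simp; ring
  rw [this]
  gcongr
  nlinarith [sq_nonneg (1 - 2 * p)]

lemma mm_mono (n : ℕ) (ε : ℝ) (h0 : 0 ≤ ε) (h1 : ε ≤ 1) (t : ℕ) : ∀ (F G : ℕ → ℝ),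
    (∀ k ≤ n, F k ≤ G k) → mm n ε t F ≤ mm n ε t G := by
  induction t with
  | zero => intro F G h; exact bin_mono n ε h0 h1 F G h
  | succ t ih =>
    intro F G h
    exact ih (QQ n F) (QQ n G) fun k _ => bin_mono n _ (pd_nonneg n k) (pd_le_one n k) F G h

lemma bin_affine (n : ℕ) (p a : ℝ) (F H : ℕ → ℝ) :
    bin n p (fun k => a * F k + H k) = a * bin n p F + bin n p H := by
  rw [bin_add n p (fun k => a * F k) H, bin_smul]

lemma mm_affine (n : ℕ) (ε : ℝ) (t : ℕ) : ∀ (a : ℝ) (F H : ℕ → ℝ),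
    mm n ε t (fun k => a * F k + H k) = a * mm n ε t F + mm n ε t H := by
  induction t with
  | zero => intro a F H; exact bin_affine n ε a F H
  | succ t ih =>
    intro a F H
    have e : QQ n (fun k => a * F k + H k) = fun k => a * QQ n F k + QQ n H k := by
      funext k; exact bin_affine n _ a F H
    change mm n ε t (QQ n (fun k => a * F k + H k)) = _
    rw [e]
    exact ih a (QQ n F) (QQ n H)

lemma mm_const (n : ℕ) (ε : ℝ) (t : ℕ) : ∀ (c : ℝ), mm n ε t (fun _ => c) = c := by
  induction t with
  | zero => intro c; exact bin_const n ε c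
  | succ t ih =>
    intro c
    have e : QQ n (fun _ => c) = fun _ => c := by
      funext k; exact bin_const n _ c
    change mm n ε t (QQ n (fun _ => c)) = _
    rw [e, ih]

lemma mm_drift (n : ℕ) (ε : ℝ) (h0 : 0 ≤ ε) (h1 : ε ≤ 1) (t : ℕ) (a : ℝ) (F H : ℕ → ℝ)
    (h : ∀ d ≤ n, QQ n F d ≤ a * F d + H d) :
    mm n ε (t + 1) F ≤ a * mm n ε t F + mm n ε t H := by
  rw [← mm_affine]
  exact mm_mono n ε h0 h1 t (QQ n F) _ h

lemma bin_pd_exp (n d : ℕ) (hn : 0 < n) (hd : d ≤ n) :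
    bin n (pd n d) (fun k => Real.exp (-k)) ≤ Real.exp (-(d:ℝ)) + Real.exp (-(n:ℝ) / 20) := by
  have hn' : (0:ℝ) < n := by exact_mod_cast hn
  have hd' : (0:ℝ) ≤ d := Nat.cast_nonneg d
  refine (bin_exp n _ (pd_nonneg n d) (pd_le_one n d)).trans ?_
  rcases pd_lower n d hn hd with h | h
  · rw [div_le_iff₀ hn'] at h
    have : Real.exp (-(n * pd n d) / 2) ≤ Real.exp (-(d:ℝ)) :=
      Real.exp_le_exp.2 (by nlinarith)
    have := Real.exp_pos (-(n:ℝ) / 20); linarith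
  · have : Real.exp (-(n * pd n d) / 2) ≤ Real.exp (-(n:ℝ) / 20) :=
      Real.exp_le_exp.2 (by nlinarith)
    have := Real.exp_pos (-(d:ℝ)); linarith

lemma bin_pd_G1 (n d : ℕ) (hn : 0 < n) (hd : d ≤ n) :
    bin n (pd n d) G1 ≤ (1 / 2) * G1 d + 10 / n := by
  have hn' : (0:ℝ) < n := by exact_mod_cast hn
  rcases Nat.eq_zero_or_pos d with rfl | hd0
  · have : pd n 0 = 0 := by unfold pd; simp
    rw [this]
    have : bin n 0 G1 = 0 := by
      unfold bin
      refine Finset.sum_eq_zero fun k _ => ?_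
      rcases Nat.eq_zero_or_pos k with rfl | hk
      · simp [G1]
      · simp [hk.ne']
    rw [this]
    have := G1_nonneg 0
    positivity
  have hd1 : (1:ℝ) ≤ d := by exact_mod_cast hd0
  have hp : 0 < pd n d := by
    rcases pd_lower n d hn hd with h | h
    · exact lt_of_lt_of_le (by positivity) h
    · linarith
  refine (bin_G1 n _ hp (pd_le_one n d)).trans ?_
  have hG : G1 d = 1 / ((d:ℝ) + 1) := by unfold G1; rw [if_neg hd0.ne']
  rw [hG]
  rcases pd_lower n d hn hd with h | h
  · rw [div_le_iff₀ hn'] at h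
    have : 1 / (((n:ℝ) + 1) * pd n d) ≤ 1 / (2 * ((d:ℝ) + 1)) :=
      one_div_le_one_div_of_le (by positivity) (by nlinarith)
    have e : (1:ℝ) / 2 * (1 / ((d:ℝ) + 1)) = 1 / (2 * ((d:ℝ) + 1)) := by field_simp
    rw [e]
    have : (0:ℝ) < 10 / n := by positivity
    linarith
  · have : 1 / (((n:ℝ) + 1) * pd n d) ≤ 1 / ((n:ℝ) / 10) :=
      one_div_le_one_div_of_le (by positivity) (by nlinarith)
    have e : 1 / ((n:ℝ) / 10) = 10 / n := by field_simp
    rw [e] at this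
    have : (0:ℝ) < 1 / 2 * (1 / ((d:ℝ) + 1)) := by positivity
    linarith

/-- boundary potential -/
def UU (n k : ℕ) : ℝ := Real.exp (-(k:ℝ)) + Real.exp (-((n - k : ℕ) : ℝ))
/-- symmetrised inverse-distance potential -/
def GG (n k : ℕ) : ℝ := G1 k + G1 (n - k)

lemma bin_UU (n : ℕ) (p : ℝ) : bin n p (UU n) =
    bin n p (fun k => Real.exp (-k)) + bin n (1 - p) (fun k => Real.exp (-k)) := by
  rw [← bin_flip, ← bin_add]; rfl

lemma bin_GG (n : ℕ) (p : ℝ) : bin n p (GG n) = bin n p G1 + bin n (1 - p) G1 := by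
  rw [← bin_flip, ← bin_add]; rfl

lemma QQ_UU (n d : ℕ) (hn : 0 < n) (hd : d ≤ n) :
    QQ n (UU n) d ≤ 1 * UU n d + 2 * Real.exp (-(n:ℝ) / 20) := by
  unfold QQ
  rw [bin_UU, ← pd_flip n d hn hd]
  have h1 := bin_pd_exp n d hn hd
  have h2 := bin_pd_exp n (n - d) hn (Nat.sub_le n d)
  unfold UU; linarith

lemma QQ_GG (n d : ℕ) (hn : 0 < n) (hd : d ≤ n) :
    QQ n (GG n) d ≤ (1 / 2) * GG n d + 20 / n := by
  unfold QQ
  rw [bin_GG, ← pd_flip n d hn hd]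
  have h1 := bin_pd_G1 n d hn hd
  have h2 := bin_pd_G1 n (n - d) hn (Nat.sub_le n d)
  have e : (20:ℝ) / n = 10 / n + 10 / n := by ring
  unfold GG; rw [e]; linarith

lemma mm_UU (n : ℕ) (hn : 0 < n) (ε : ℝ) (h0 : 0 < ε) (h1 : ε ≤ 1 / 2) (t : ℕ) :
    mm n ε t (UU n) ≤ 2 * Real.exp (-(n * ε) / 2) + 2 * t * Real.exp (-(n:ℝ) / 20) := by
  have hn' : (0:ℝ) < n := by exact_mod_cast hn
  induction t with
  | zero =>
    change bin n ε (UU n) ≤ _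
    rw [bin_UU]
    have a := bin_exp n ε h0.le (by linarith)
    have b := bin_exp n (1 - ε) (by linarith) (by linarith)
    have c : Real.exp (-(n * (1 - ε)) / 2) ≤ Real.exp (-(n * ε) / 2) :=
      Real.exp_le_exp.2 (by nlinarith)
    push_cast; linarith
  | succ t ih =>
    have := mm_drift n ε h0.le (by linarith) t 1 (UU n) (fun _ => 2 * Real.exp (-(n:ℝ) / 20))
      (fun d hd => QQ_UU n d hn hd)
    rw [mm_const] at this
    push_cast; linarith

lemma mm_GG (n : ℕ) (hn : 0 < n) (ε : ℝ) (h0 : 0 < ε) (h1 : ε ≤ 1 / 2) (t : ℕ) :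
    mm n ε t (GG n) ≤ (1 / 2) ^ t * (2 / (n * ε)) + 40 / n := by
  have hn' : (0:ℝ) < n := by exact_mod_cast hn
  induction t with
  | zero =>
    change bin n ε (GG n) ≤ _
    rw [bin_GG]
    have a := bin_G1 n ε h0 (by linarith)
    have b := bin_G1 n (1 - ε) (by linarith) (by linarith)
    have a' : 1 / (((n:ℝ) + 1) * ε) ≤ 1 / (n * ε) :=
      one_div_le_one_div_of_le (by positivity) (by nlinarith)
    have b' : 1 / (((n:ℝ) + 1) * (1 - ε)) ≤ 1 / (n * ε) :=
      one_div_le_one_div_of_le (by positivity) (by nlinarith)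
    have e : 2 / (n * ε) = 1 / (n * ε) + 1 / (n * ε) := by ring
    have : (0:ℝ) < 40 / n := by positivity
    rw [pow_zero, one_mul, e]; linarith
  | succ t ih =>
    have := mm_drift n ε h0.le (by linarith) t (1 / 2) (GG n) (fun _ => 20 / (n:ℝ))
      (fun d hd => QQ_GG n d hn hd)
    rw [mm_const] at this
    have e : (40:ℝ) / n = 2 * (20 / n) := by ring
    rw [e] at ih ⊢
    rw [pow_succ]; linarith

lemma UG_ge (n d : ℕ) (hn : 0 < n) (hd : d ≤ n) (α : ℝ) (ha : 0 < α)
    (h : 1 - 2 * α < |1 - 2 * (d:ℝ) / n|) : 1 ≤ UU n d + (α * n + 1) * GG n d := by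
  have hn' : (0:ℝ) < n := by exact_mod_cast hn
  have key : ∀ m : ℕ, (m:ℝ) < α * n → 1 ≤ Real.exp (-(m:ℝ)) + (α * n + 1) * G1 m := by
    intro m hm
    rcases Nat.eq_zero_or_pos m with rfl | hm0
    · simp [G1]
    · have : G1 m = 1 / ((m:ℝ) + 1) := by unfold G1; rw [if_neg hm0.ne']
      rw [this]
      have : 1 ≤ (α * n + 1) * (1 / ((m:ℝ) + 1)) := by
        rw [mul_one_div, le_div_iff₀ (by positivity)]; linarith
      have := Real.exp_pos (-(m:ℝ)); linarith
  have g1 := G1_nonneg d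
  have g2 := G1_nonneg (n - d)
  have e1 := Real.exp_pos (-(d:ℝ))
  have e2 := Real.exp_pos (-((n - d : ℕ):ℝ))
  have hA : 0 < α * n + 1 := by positivity
  unfold UU GG
  rw [mul_add]
  have p1 := mul_nonneg hA.le g1
  have p2 := mul_nonneg hA.le g2
  rcases lt_abs.1 h with h | h
  · have : 2 * (d:ℝ) / n < 2 * α := by linarith
    rw [div_lt_iff₀ hn'] at this
    have := key d (by linarith)
    linarith
  · have : 2 - 2 * α < 2 * (d:ℝ) / n := by linarith
    rw [lt_div_iff₀ hn'] at this
    have := key (n - d) (by rw [Nat.cast_sub hd]; linarith)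
    linarith

/-- squared overlap -/
def RR (n k : ℕ) : ℝ := (1 - 2 * (k:ℝ) / n) ^ 2

lemma abs_rho_le (n d : ℕ) (hn : 0 < n) (hd : d ≤ n) : |1 - 2 * (d:ℝ) / n| ≤ 1 := by
  have hn' : (0:ℝ) < n := by exact_mod_cast hn
  have hd' : (d:ℝ) ≤ n := by exact_mod_cast hd
  have a : 0 ≤ 2 * (d:ℝ) / n := by positivity
  have b : 2 * (d:ℝ) / n ≤ 2 := by rw [div_le_iff₀ hn']; linarith
  rw [abs_le]; constructor <;> linarith

lemma RR_le_one (n d : ℕ) (hn : 0 < n) (hd : d ≤ n) : RR n d ≤ 1 := by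
  unfold RR
  exact (sq_le_one_iff_abs_le_one _).2 (abs_rho_le n d hn hd)

lemma QQ_RR (α γ : ℝ) (ha : 0 < α) (g0 : 0 < γ) (g1 : γ < 1)
    (hg : ∀ n d : ℕ, 0 < n → d ≤ n → |1 - 2 * (d:ℝ) / n| ≤ 1 - 2 * α →
      (1 - 2 * pd n d) ^ 2 ≤ γ * (1 - 2 * (d:ℝ) / n) ^ 2) (n d : ℕ) (hn : 0 < n) (hd : d ≤ n) :
    QQ n (RR n) d ≤ γ * RR n d +
      ((1 - γ) * UU n d + ((1 - γ) * (α * n + 1) * GG n d + 1 / n)) := by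
  have hn' : (0:ℝ) < n := by exact_mod_cast hn
  have hb : QQ n (RR n) d ≤ (1 - 2 * pd n d) ^ 2 + 1 / n := bin_R n hn (pd n d)
  have gg : 0 ≤ GG n d := add_nonneg (G1_nonneg _) (G1_nonneg _)
  have uu : 0 ≤ UU n d := by unfold UU; positivity
  have h1g : 0 ≤ 1 - γ := by linarith
  rcases le_or_gt |1 - 2 * (d:ℝ) / n| (1 - 2 * α) with h | h
  · have := hg n d hn hd h
    have p1 : 0 ≤ (1 - γ) * UU n d := by positivity
    have p2 : 0 ≤ (1 - γ) * (α * n + 1) * GG n d := by positivity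
    unfold RR at *; linarith
  · have k := UG_ge n d hn hd α ha h
    have r1 := RR_le_one n d hn hd
    have ph : (1 - 2 * pd n d) ^ 2 ≤ RR n d := sq_le_sq.2 (phi_le n d hn hd)
    have := mul_le_mul_of_nonneg_left k h1g
    nlinarith

lemma mm_RR (α γ : ℝ) (ha : 0 < α) (g0 : 0 < γ) (g1 : γ < 1)
    (hg : ∀ n d : ℕ, 0 < n → d ≤ n → |1 - 2 * (d:ℝ) / n| ≤ 1 - 2 * α →
      (1 - 2 * pd n d) ^ 2 ≤ γ * (1 - 2 * (d:ℝ) / n) ^ 2) (n : ℕ) (hn : 0 < n)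
    (ε : ℝ) (h0 : 0 < ε) (h1 : ε ≤ 1 / 2) (T t0 : ℕ) (u v : ℝ)
    (hu : u = 2 * Real.exp (-(n * ε) / 2) + 2 * T * Real.exp (-(n:ℝ) / 20))
    (hv : v = (1 / 2) ^ t0 * (2 / (n * ε)) + 40 / n) (s : ℕ) (hs : t0 + s ≤ T) :
    mm n ε (t0 + s) (RR n) ≤ γ ^ s + (u + (α * n + 1) * v) + 1 / (n * (1 - γ)) := by
  have hn' : (0:ℝ) < n := by exact_mod_cast hn
  have h1g : 0 < 1 - γ := by linarith
  have hu0 : 0 ≤ u := by rw [hu]; positivity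
  have hv0 : 0 ≤ v := by rw [hv]; positivity
  induction s with
  | zero =>
    have := mm_mono n ε h0.le (by linarith) t0 (RR n) (fun _ => 1) (fun d hd => RR_le_one n d hn hd)
    rw [mm_const] at this
    have p1 : 0 ≤ (α * n + 1) * v := by positivity
    have p2 : 0 < 1 / (n * (1 - γ)) := by positivity
    rw [add_zero, pow_zero]; linarith
  | succ s ih =>
    have ih := ih (by omega)
    have st := mm_drift n ε h0.le (by linarith) (t0 + s) γ (RR n) _
      (fun d hd => QQ_RR α γ ha g0 g1 hg n d hn hd)
    rw [mm_affine n ε (t0 + s) (1 - γ) (UU n), mm_affine n ε (t0 + s) _ (GG n), mm_const] at st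
    have bu : mm n ε (t0 + s) (UU n) ≤ u := by
      refine (mm_UU n hn ε h0 h1 _).trans ?_
      rw [hu]
      have : ((t0 + s : ℕ) : ℝ) ≤ T := by exact_mod_cast (by omega)
      gcongr
    have bv : mm n ε (t0 + s) (GG n) ≤ v := by
      refine (mm_GG n hn ε h0 h1 _).trans ?_
      rw [hv]
      have : ((1:ℝ) / 2) ^ (t0 + s) ≤ (1 / 2) ^ t0 :=
        pow_le_pow_of_le_one (by norm_num) (by norm_num) (by omega)
      gcongr
    have a1 := mul_le_mul_of_nonneg_left bu h1g.le
    have a2 := mul_le_mul_of_nonneg_left bv (show 0 ≤ (1 - γ) * (α * n + 1) by positivity)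
    have a3 := mul_le_mul_of_nonneg_left ih g0.le
    have e : (1:ℝ) / n = (1 - γ) * (1 / (n * (1 - γ))) := by field_simp
    rw [e] at st
    rw [← add_assoc]
    refine st.trans ?_
    rw [pow_succ]
    linarith

lemma annealed_bound (α γ κ : ℝ) (ha : 0 < α) (g0 : 0 < γ) (g1 : γ < 1) (hκ : 0 < κ)
    (hg : ∀ n d : ℕ, 0 < n → d ≤ n → |1 - 2 * (d:ℝ) / n| ≤ 1 - 2 * α →
      (1 - 2 * pd n d) ^ 2 ≤ γ * (1 - 2 * (d:ℝ) / n) ^ 2) (n : ℕ) (hn : 0 < n)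
    (ε : ℝ) (h0 : 0 < ε) (h1 : ε ≤ 1 / 2) (T s : ℕ) (hs : s + 1 ≤ T)
    (h : (Fin n → Bool) → Bool) :
    |annealedCov n T ε h| ≤ κ + (1 / κ) * (γ ^ s +
      ((2 * Real.exp (-(n * ε) / 2) + 2 * T * Real.exp (-(n:ℝ) / 20)) +
       (α * n + 1) * ((1 / 2) ^ (T - 1 - s) * (2 / (n * ε)) + 40 / n)) + 1 / (n * (1 - γ))) := by
  obtain ⟨t0, rfl⟩ : ∃ t0, T = t0 + s + 1 := ⟨T - 1 - s, by omega⟩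
  refine (annealed_le n hn (t0 + s) ε h0.le (by linarith) h).trans ?_
  have e : t0 + s + 1 - 1 - s = t0 := by omega
  have hR := mm_RR α γ ha g0 g1 hg n hn ε h0 h1 (t0 + s + 1) t0 _ _ rfl rfl s (by omega)
  rw [e]
  refine le_trans ?_ (add_le_add_right (mul_le_mul_of_nonneg_left hR (by positivity)) κ)
  have := mm_mono n ε h0.le (by linarith) (t0 + s) (fun d => |1 - 2 * pd n d|)
    (fun d => (1 / κ) * RR n d + κ) (fun d hd => by
      refine (phi_le n d hn hd).trans ?_
      unfold RR
      rw [← sq_abs]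
      set r := |1 - 2 * (d:ℝ) / n|
      rw [one_div, inv_mul_eq_div, ← sub_le_iff_le_add, le_div_iff₀ hκ]
      nlinarith [sq_nonneg (r - κ), abs_nonneg (1 - 2 * (d:ℝ) / n)])
  rw [mm_affine n ε (t0 + s) (1 / κ) (RR n), mm_const] at this
  linarith

/-- for the fully connected sign network with i.i.d. standard normal weights,
if `1/2 ≥ ε_n ↓ 0` with `n ε_n → ∞`, `K_n / log(1/ε_n) → ∞`, `b_n → 0`, `n b_n → ∞` and
`T_n ∈ [K_n, e^{b_n n}]`, then for any Boolean functions `h_n` the network output is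
annealed quantitatively noise sensitive at level `{ε_n}`. -/
theorem annealed_QNS_of_iid_weights
    (ε : ℕ → ℝ) (hε_pos : ∀ n, 0 < ε n) (hε_half : ∀ n, ε n ≤ 1 / 2)
    (hε_anti : Antitone ε) (hε_lim : Tendsto ε atTop (nhds 0))
    (hnε : Tendsto (fun n : ℕ => (n : ℝ) * ε n) atTop atTop)
    (K : ℕ → ℝ) (hK : Tendsto (fun n => K n / Real.log (1 / ε n)) atTop atTop)
    (b : ℕ → ℝ) (hb0 : Tendsto b atTop (nhds 0))
    (hbn : Tendsto (fun n : ℕ => (n : ℝ) * b n) atTop atTop)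
    (T : ℕ → ℕ) (hT : ∀ n, K n ≤ (T n : ℝ) ∧ (T n : ℝ) ≤ Real.exp (b n * n))
    (h : (n : ℕ) → (Fin n → Bool) → Bool) :
    Tendsto (fun n => annealedCov n (T n) (ε n) (h n)) atTop (nhds 0) := by
  have hL : ∀ n, 1 / 2 ≤ Real.log (1 / ε n) := fun n => by
    have h2 : (2:ℝ) ≤ 1 / ε n := by
      rw [le_div_iff₀ (hε_pos n)]; linarith [hε_half n]
    have := Real.log_le_log two_pos h2
    linarith [Real.log_two_gt_d9]
  have hTL : ∀ M : ℝ, ∀ᶠ n in atTop, M * Real.log (1 / ε n) ≤ T n := fun M => by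
    filter_upwards [hK.eventually_ge_atTop M] with n hn
    rw [le_div_iff₀ (by linarith [hL n])] at hn
    exact hn.trans (hT n).1
  have hcast : Tendsto (fun n : ℕ => (n:ℝ)) atTop atTop := tendsto_natCast_atTop_atTop
  have l1 : Tendsto (fun n : ℕ => Real.exp (-(n * ε n) / 2)) atTop (nhds 0) := by
    refine Real.tendsto_exp_atBot.comp ?_
    have := tendsto_neg_atTop_atBot.comp (hnε.atTop_div_const (two_pos : (0:ℝ) < 2))
    refine this.congr fun n => ?_
    simp only [Function.comp]; ring
  have l2 : Tendsto (fun n : ℕ => (T n : ℝ) * Real.exp (-(n:ℝ) / 20)) atTop (nhds 0) := by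
    have h40 : Tendsto (fun n : ℕ => Real.exp (-((n:ℝ) / 40))) atTop (nhds 0) :=
      Real.tendsto_exp_atBot.comp
        (tendsto_neg_atTop_atBot.comp (hcast.atTop_div_const (by norm_num : (0:ℝ) < 40)))
    refine squeeze_zero' (Eventually.of_forall fun n => by positivity) ?_ h40
    filter_upwards [hb0.eventually_le_const (show (0:ℝ) < 1 / 40 by norm_num)] with n hn
    calc (T n : ℝ) * Real.exp (-(n:ℝ) / 20)
        ≤ Real.exp (b n * n) * Real.exp (-(n:ℝ) / 20) :=
          mul_le_mul_of_nonneg_right (hT n).2 (Real.exp_pos _).le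
      _ = Real.exp (b n * n + -(n:ℝ) / 20) := (Real.exp_add _ _).symm
      _ ≤ _ := Real.exp_le_exp.2 (by
          have : (0:ℝ) ≤ n := Nat.cast_nonneg n
          nlinarith)
  have l3 : Tendsto (fun n : ℕ => ((1:ℝ) / 2) ^ (T n) / ε n) atTop (nhds 0) := by
    refine squeeze_zero' (Eventually.of_forall fun n => by have := hε_pos n; positivity) ?_ hε_lim
    filter_upwards [hTL 4] with n hn
    have he := hε_pos n
    rw [div_le_iff₀ he]
    have h12 : (1:ℝ) / 2 ≤ Real.exp (-(1 / 2)) := by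
      have := Real.add_one_le_exp (-(1 / 2 : ℝ)); linarith
    calc ((1:ℝ) / 2) ^ (T n) ≤ Real.exp (-(1 / 2)) ^ (T n) :=
          pow_le_pow_left₀ (by norm_num) h12 _
      _ = Real.exp (T n * -(1 / 2)) := (Real.exp_nat_mul _ _).symm
      _ ≤ Real.exp (Real.log (ε n) + Real.log (ε n)) := Real.exp_le_exp.2 (by
          rw [one_div, Real.log_inv] at hn; linarith)
      _ = ε n * ε n := by rw [Real.exp_add, Real.exp_log he]
  have l4 : Tendsto (fun n : ℕ => 1 / (n:ℝ)) atTop (nhds 0) := tendsto_one_div_atTop_nhds_zero_nat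
  rw [Metric.tendsto_atTop']
  intro δ hδ
  set η : ℝ := δ ^ 2 / 64 with hη
  have η0 : 0 < η := by positivity
  set α : ℝ := min (1 / 4) (η / 40) with hα
  have α0 : 0 < α := lt_min (by norm_num) (by positivity)
  have α4 : α ≤ 1 / 4 := min_le_left _ _
  have αη : 40 * α ≤ η := by have : α ≤ η / 40 := min_le_right _ _; linarith
  obtain ⟨γ, g0, g1, hg⟩ := phi_strict α α0 (by linarith)
  obtain ⟨s, hs⟩ := exists_pow_lt_of_lt_one η0 g1
  have lim : Tendsto (fun n : ℕ => 2 * Real.exp (-(n * ε n) / 2) +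
      2 * ((T n : ℝ) * Real.exp (-(n:ℝ) / 20)) + 4 * 2 ^ (s + 1) * (((1:ℝ) / 2) ^ (T n) / ε n) +
      (40 + 1 / (1 - γ)) * (1 / (n:ℝ))) atTop (nhds 0) := by
    have := (((l1.const_mul 2).add (l2.const_mul 2)).add (l3.const_mul (4 * 2 ^ (s + 1)))).add
      (l4.const_mul (40 + 1 / (1 - γ)))
    simpa using this
  have ev : ∀ᶠ n in atTop, dist (annealedCov n (T n) (ε n) (h n)) 0 < δ := by
    filter_upwards [lim.eventually_lt_const η0, hTL (2 * (s + 1)), eventually_gt_atTop 0]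
      with n hF hTs hn
    have hn' : (1:ℝ) ≤ n := by exact_mod_cast hn
    have he := hε_pos n
    have hsT : s + 1 ≤ T n := by
      have : ((s:ℝ) + 1) ≤ T n := by
        have := hL n
        have : (0:ℝ) ≤ s := Nat.cast_nonneg s
        nlinarith
      exact_mod_cast this
    rw [Real.dist_eq, sub_zero]
    have B := annealed_bound α γ (δ / 4) α0 g0 g1 (by positivity) hg n hn (ε n) he (hε_half n)
      (T n) s hsT (h n)
    have c1 : (α * n + 1) * ((1 / 2) ^ (T n - 1 - s) * (2 / (n * ε n)) + 40 / n) ≤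
        4 * 2 ^ (s + 1) * (((1:ℝ) / 2) ^ (T n) / ε n) + 40 * α + 40 * (1 / n) := by
      obtain ⟨t0, ht0⟩ : ∃ t0, T n = t0 + (s + 1) := ⟨T n - 1 - s, by omega⟩
      have e : T n - 1 - s = t0 := by omega
      rw [e]
      have e2 : (2:ℝ) ^ (s + 1) * (1 / 2) ^ (T n) = (1 / 2) ^ t0 := by
        rw [ht0, pow_add ((1:ℝ) / 2) t0, mul_left_comm, ← mul_pow]; norm_num
      have e3 : 4 * 2 ^ (s + 1) * (((1:ℝ) / 2) ^ (T n) / ε n) = 4 * ((1 / 2) ^ t0 / ε n) := by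
        rw [← e2]; ring
      rw [e3]
      have e4 : (α * n + 1) * ((1 / 2) ^ t0 * (2 / (n * ε n)) + 40 / n) =
          ((α * n + 1) / n * 2) * ((1 / 2) ^ t0 / ε n) + 40 * α + 40 * (1 / n) := by
        field_simp; ring
      rw [e4]
      have : (α * n + 1) / n ≤ 2 := by
        rw [div_le_iff₀ (by positivity)]; nlinarith
      have : (α * n + 1) / n * 2 * ((1 / 2) ^ t0 / ε n) ≤ 4 * ((1 / 2) ^ t0 / ε n) :=
        mul_le_mul_of_nonneg_right (by linarith) (by positivity)
      linarith
    have h1g : 0 < 1 - γ := by linarith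
    have c2 : 1 / ((n:ℝ) * (1 - γ)) = 1 / (1 - γ) * (1 / n) := by field_simp
    have X : γ ^ s + ((2 * Real.exp (-(n * ε n) / 2) + 2 * T n * Real.exp (-(n:ℝ) / 20)) +
       (α * n + 1) * ((1 / 2) ^ (T n - 1 - s) * (2 / (n * ε n)) + 40 / n)) +
       1 / (n * (1 - γ)) ≤ 3 * η := by
      rw [c2]; linarith
    have Y := mul_le_mul_of_nonneg_left X (show 0 ≤ 1 / (δ / 4) by positivity)
    have Z : 1 / (δ / 4) * (3 * η) = 3 * δ / 16 := by rw [hη]; field_simp; norm_num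
    rw [Z] at Y
    linarith
  obtain ⟨N, hN⟩ := eventually_atTop.1 ev
  exact ⟨N, fun n hn => hN n hn.le⟩

end
end
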